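/- arXiv:1305.4532 — 7 statements merged into one kernel-verified Lean document; each statement's English description precedes it below -/
import Mathlib

section
/- (Erdős–Rado theorem.) Let κ be an infinite cardinal and r ≥ 2 a finite number. Then (exp_r(κ))⁺ → (κ⁺)^{r+1}_κ: for every set S of cardinality (exp_r(κ))⁺ and every function f from the (r+1)-element subsets of S into a set of colours of cardinality at most κ, there exists a subset H ⊆ S of cardinality κ⁺ such that f is constant on the (r+1)-element subsets of H. -/
open Cardinal

/-- Iterated exponential: `expIter 0 κ = κ`, `expIter (m+1) κ = 2 ^ expIter m κ`. -/
def expIter : ℕ → Cardinal → Cardinal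
  | 0, κ => κ
  | m + 1, κ => 2 ^ expIter m κ

/-!
Induct on `r`, starting from the pigeonhole principle. To step up, let `f` colour the finite subsets
of `S`, where `#S > 2 ^ μ`. A Löwenheim–Skolem argument gives `B ⊆ S` of size at most `2 ^ μ` such
that every point outside `B` is imitated, over each `X ⊆ B` of size at most `μ`, by a point of
`B \ X`. Fix `y ∉ B` and choose recursively, for `i < μ⁺`, a point `a i ∈ B` imitating `y` over the
earlier ones. The colour of a finite set of terms `a i` does not change when its last point is
replaced by `y`, so it depends only on the other points, and the induction hypothesis applies.
-/

/-- The partition relation `l → (m)^s_k`. Colourings are total on `Finset S`; only their values on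
`s`-element sets matter. -/
def PartitionArrow (l m : Cardinal.{u}) (s : ℕ) (k : Cardinal.{u}) : Prop :=
  ∀ S : Type u, #S = l → ∀ C : Type u, #C ≤ k → ∀ f : Finset S → C,
    ∃ H : Set S, #H = m ∧
      ∀ t u : Finset S, ↑t ⊆ H → ↑u ⊆ H → t.card = s → u.card = s → f t = f u

theorem partitionArrow_one_of_isRegular {l k : Cardinal.{u}} (hl : l.IsRegular) (hk : k < l) :
    PartitionArrow l l 1 k := by
  intro S hS C hC f
  obtain ⟨c, hc⟩ := infinite_pigeonhole_card (fun x => f {x}) l hS.ge hl.aleph0_le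
    (hl.cof_ord.symm ▸ hC.trans_lt hk)
  have color_eq : ∀ t : Finset S, ↑t ⊆ (fun x => f {x}) ⁻¹' {c} → t.card = 1 → f t = c := by
    intro t ht h1
    obtain ⟨x, rfl⟩ := Finset.card_eq_one.1 h1
    exact ht (Finset.mem_coe.2 (Finset.mem_singleton_self x))
  exact ⟨_, ((mk_set_le _).trans_eq hS).antisymm hc, fun t u ht hu ht1 hu1 =>
    (color_eq t ht ht1).trans (color_eq u hu hu1).symm⟩

theorem exists_set_closed_under_witnesses {S ι : Type u} {β : ι → Type u} {c : Cardinal.{u}}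
    (hc : (sum fun i => c ^ #(β i)) ≤ c) (R : ∀ i, (β i → S) → S → Prop) :
    ∃ B : Set S, #B ≤ c ∧
      ∀ i (w : β i → S), (∀ j, w j ∈ B) → (∃ x, R i w x) → ∃ x ∈ B, R i w x := by
  cases isEmpty_or_nonempty S with
  | inl _ => exact ⟨∅, by simp, fun _ _ _ ⟨x, _⟩ => isEmptyElim x⟩
  | inr _ =>
    -- `B` consists of the values of all well-founded terms built from Skolem functions for `R`.
    let eval : WType β → S := WType.elim S fun p => Classical.epsilon (R p.1 p.2)
    refine ⟨Set.range eval, mk_range_le.trans (WType.cardinalMk_le_of_le hc), ?_⟩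
    intro i w hw hex
    choose term hterm using hw
    obtain rfl : (fun j => eval (term j)) = w := funext hterm
    exact ⟨eval (WType.mk i term), ⟨_, rfl⟩, Classical.epsilon_spec hex⟩

theorem two_power_power_self {μ : Cardinal.{u}} (hμ : ℵ₀ ≤ μ) :
    ((2 : Cardinal) ^ μ) ^ μ = 2 ^ μ := by
  rw [← power_mul, mul_eq_self hμ]

theorem mk_sigma_set_finset_arrow_le {M C : Type u} [Infinite M] (hC : #C ≤ 2 ^ #M) :
    #(Σ A : Set M, Finset A → C) ≤ 2 ^ #M := by
  have hM : ℵ₀ ≤ #M := aleph0_le_mk M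
  have hpow : ℵ₀ ≤ (2 : Cardinal) ^ #M := hM.trans (cantor _).le
  have arrow_le : ∀ A : Set M, #(Finset A → C) ≤ 2 ^ #M := by
    intro A
    have finset_le : #(Finset A) ≤ #M :=
      (mk_le_of_injective (Finset.map_injective (.subtype (· ∈ A)))).trans_eq
        (mk_finset_of_infinite M)
    calc #(Finset A → C) = #C ^ #(Finset A) := (power_def _ _).symm
      _ ≤ (2 ^ #M) ^ #(Finset A) := power_le_power_right hC
      _ ≤ (2 ^ #M) ^ #M := power_le_power_left (aleph0_pos.trans_le hpow).ne' finset_le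
      _ = 2 ^ #M := two_power_power_self hM
  calc #(Σ A : Set M, Finset A → C) = sum fun A : Set M => #(Finset A → C) := mk_sigma _
    _ ≤ sum fun _ : Set M => 2 ^ #M := sum_le_sum _ _ arrow_le
    _ = 2 ^ #M * 2 ^ #M := by rw [sum_const', mk_set]
    _ = 2 ^ #M := mul_eq_self hpow

section Types

variable {S C : Type u} [DecidableEq S]

/-- `y` and `z` have the same type over `X` with respect to the colouring `f`: over finite subsets
of `X` the colouring does not distinguish them. -/
def SameType (f : Finset S → C) (X : Set S) (y z : S) : Prop :=
  ∀ t : Finset S, ↑t ⊆ X → f (insert y t) = f (insert z t)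

/-- Every point outside `B` has, over each subset `X` of `B` of size at most `μ`, the type of some
point of `B \ X`. This is the trace on `f` of `B` being an elementary submodel closed under
`μ`-sequences. -/
def ReflectsTypes (f : Finset S → C) (μ : Cardinal.{u}) (B : Set S) : Prop :=
  ∀ X ⊆ B, #X ≤ μ → ∀ y ∉ B, ∃ b ∈ B, b ∉ X ∧ SameType f X b y

theorem exists_reflectsTypes {μ : Cardinal.{u}} (hμ : ℵ₀ ≤ μ) (hC : #C ≤ 2 ^ μ)
    (f : Finset S → C) : ∃ B : Set S, #B ≤ 2 ^ μ ∧ ReflectsTypes f μ B := by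
  induction μ using Cardinal.inductionOn with | _ M
  have : Infinite M := infinite_iff.2 hμ
  have hpow : ℵ₀ ≤ (2 : Cardinal) ^ #M := hμ.trans (cantor _).le
  have sum_le : (sum fun i : Σ A : Set M, Finset A → C => (2 ^ #M) ^ #i.1) ≤ 2 ^ #M :=
    calc (sum fun i : Σ A : Set M, Finset A → C => (2 ^ #M) ^ #i.1)
      _ ≤ sum fun _ : Σ A : Set M, Finset A → C => 2 ^ #M := sum_le_sum _ _ fun i =>
          (power_le_power_left (aleph0_pos.trans_le hpow).ne' (mk_set_le i.1)).trans_eq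
            (two_power_power_self hμ)
      _ = #(Σ A : Set M, Finset A → C) * 2 ^ #M := sum_const' _ _
      _ ≤ 2 ^ #M * 2 ^ #M := mul_le_mul_left (mk_sigma_set_finset_arrow_le hC) _
      _ = 2 ^ #M := mul_eq_self hpow
  -- `i.2` prescribes a type over the range of a sequence `w` indexed by `i.1`.
  obtain ⟨B, hB, witness⟩ := exists_set_closed_under_witnesses sum_le fun i w x =>
    x ∉ Set.range w ∧ ∀ t : Finset i.1, f (insert x (t.image w)) = i.2 t
  refine ⟨B, hB, fun X hXB hX y hy => ?_⟩
  obtain ⟨A, hA⟩ := le_mk_iff_exists_set.1 hX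
  obtain ⟨e⟩ := Cardinal.eq.1 hA
  have range_eq : Set.range (fun j => (e j : S)) = X := by
    rw [← Function.comp_def, e.surjective.range_comp, Subtype.range_coe]
  obtain ⟨b, hbB, hbX, hb⟩ := witness ⟨A, fun t => f (insert y (t.image fun j => (e j : S)))⟩
    (fun j => e j) (fun j => hXB (e j).2)
    ⟨y, fun h => hy (hXB (range_eq.subset h)), fun _ => rfl⟩
  rw [range_eq] at hbX
  refine ⟨b, hbB, hbX, fun t ht => ?_⟩
  rw [← range_eq, ← Set.image_univ] at ht
  obtain ⟨t', -, rfl⟩ := Finset.subset_set_image_iff.1 ht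
  exact hb t'

end Types

section EndHomogeneous

theorem exists_seq_forall_image_Iio {J α : Type u} [Preorder J] [WellFoundedLT J] {μ : Cardinal.{u}}
    (hJ : ∀ i : J, #(Set.Iio i) ≤ μ) {P : Set α → α → Prop}
    (hP : ∀ X : Set α, #X ≤ μ → ∃ b, P X b) :
    ∃ a : J → α, ∀ i, P (a '' Set.Iio i) (a i) := by
  choose next hnext using hP
  let a : J → α := wellFounded_lt.fix fun i rec =>
    next (Set.range fun j : Set.Iio i => rec j j.2) (mk_range_le.trans (hJ i))
  refine ⟨a, fun i => ?_⟩
  have ha : a i = next (Set.range fun j : Set.Iio i => a j) (mk_range_le.trans (hJ i)) :=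
    WellFounded.fix_eq _ _ _
  rw [Set.image_eq_range, ha]
  exact hnext _ _

variable {J S C : Type u} [DecidableEq S]

/-- The sequence `a` is end-homogeneous for `f`, with `y` as a common end: appending any `a i` to a
finite set of earlier terms yields the same colour as appending `y`. -/
def IsEndHomogeneous [Preorder J] (f : Finset S → C) (y : S) (a : J → S) : Prop :=
  ∀ i, SameType f (a '' Set.Iio i) (a i) y

theorem ReflectsTypes.exists_isEndHomogeneous [LinearOrder J] [WellFoundedLT J]
    {μ : Cardinal.{u}} (hJ : ∀ i : J, #(Set.Iio i) ≤ μ) {f : Finset S → C} {B : Set S}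
    (hB : ReflectsTypes f μ B) {y : S} (hy : y ∉ B) :
    ∃ a : J → S, Function.Injective a ∧ IsEndHomogeneous f y a := by
  have imitate : ∀ X : Set B, #X ≤ μ → ∃ b : B, b ∉ X ∧ SameType f (Subtype.val '' X) b y := by
    intro X hX
    obtain ⟨b, hbB, hbX, hb⟩ :=
      hB (Subtype.val '' X) (Subtype.coe_image_subset B X) (mk_image_le.trans hX) y hy
    exact ⟨⟨b, hbB⟩, fun h => hbX (Set.mem_image_of_mem _ h), hb⟩
  obtain ⟨a, ha⟩ := exists_seq_forall_image_Iio hJ imitate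
  have a_inj : Function.Injective a :=
    .of_lt_imp_ne fun i j hij h => (ha j).1 ⟨i, hij, h⟩
  refine ⟨fun i => a i, Subtype.val_injective.comp a_inj, fun i => ?_⟩
  simpa only [Set.image_image] using (ha i).2

theorem IsEndHomogeneous.apply_image [LinearOrder J] {f : Finset S → C} {y : S}
    {a : J → S} (ha : IsEndHomogeneous f y a) {v : Finset J} (hv : v.Nonempty) :
    f (v.image a) = f (insert y ((v.erase (v.max' hv)).image a)) := by
  conv_lhs => rw [← Finset.insert_erase (v.max'_mem hv), Finset.image_insert]
  refine ha _ _ ?_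
  rw [Finset.coe_image]
  exact Set.image_mono fun _ hx => Finset.lt_max'_of_mem_erase_max' _ hv hx

end EndHomogeneous

theorem PartitionArrow.step_up {μ m k : Cardinal.{u}} {s : ℕ} (hμ : ℵ₀ ≤ μ) (hk : k ≤ 2 ^ μ)
    (h : PartitionArrow (Order.succ μ) m s k) :
    PartitionArrow (Order.succ (2 ^ μ)) m (s + 1) k := by
  classical
  intro S hS C hC f
  obtain ⟨B, hB, hBf⟩ := exists_reflectsTypes hμ (hC.trans hk) f
  obtain ⟨y, hy⟩ : Bᶜ.Nonempty :=
    compl_nonempty_of_mk_lt_mk (hB.trans_lt (hS ▸ Order.lt_succ _))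
  have Iio_le : ∀ i : (Order.succ μ).ord.ToType, #(Set.Iio i) ≤ μ := fun i =>
    Order.lt_succ_iff.1 ((mk_Iio_lt i (by simp)).trans_eq (mk_ord_toType _))
  obtain ⟨a, a_inj, ha⟩ := hBf.exists_isEndHomogeneous Iio_le hy
  obtain ⟨H, hH, hom⟩ := h _ (mk_ord_toType _) C hC fun t => f (insert y (t.image a))
  refine ⟨a '' H, (mk_image_eq a_inj).trans hH, ?_⟩
  have delete_last : ∀ t : Finset S, ↑t ⊆ a '' H → t.card = s + 1 →
      ∃ v : Finset _, ↑v ⊆ H ∧ v.card = s ∧ f t = f (insert y (v.image a)) := by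
    intro t ht hcard
    obtain ⟨v, hv, rfl⟩ := Finset.subset_set_image_iff.1 ht
    rw [Finset.card_image_of_injective _ a_inj] at hcard
    have hne : v.Nonempty := Finset.card_pos.1 (hcard ▸ s.succ_pos)
    refine ⟨v.erase (v.max' hne), (Finset.coe_subset.2 (v.erase_subset _)).trans hv, ?_,
      ha.apply_image hne⟩
    rw [Finset.card_erase_of_mem (v.max'_mem hne), hcard, Nat.add_sub_cancel]
  intro t u ht hu htc huc
  obtain ⟨v, hv, hvc, hfv⟩ := delete_last t ht htc
  obtain ⟨w, hw, hwc, hfw⟩ := delete_last u hu huc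
  exact hfv.trans ((hom v w hv hw hvc hwc).trans hfw.symm)

theorem le_expIter (κ : Cardinal.{u}) (r : ℕ) : κ ≤ expIter r κ := by
  induction r with
  | zero => exact le_rfl
  | succ r ih => exact ih.trans (cantor _).le

theorem erdosRado_general (κ : Cardinal.{u}) (hκ : ℵ₀ ≤ κ) (r : ℕ) :
    PartitionArrow (Order.succ (expIter r κ)) (Order.succ κ) (r + 1) κ := by
  induction r with
  | zero => exact partitionArrow_one_of_isRegular (isRegular_succ hκ) (Order.lt_succ κ)
  | succ r ih => exact ih.step_up (hκ.trans (le_expIter κ r)) (le_expIter κ (r + 1))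

/-- **Erdős–Rado theorem.** For an infinite cardinal `κ` and finite `r ≥ 2`,
`(exp_r κ)⁺ → (κ⁺)^{r+1}_κ`: any colouring of the `(r+1)`-element subsets of a set `S`
of cardinality `(exp_r κ)⁺` in at most `κ` colours has a homogeneous set of cardinality `κ⁺`. -/
theorem erdosRado (κ : Cardinal.{u}) (hκ : ℵ₀ ≤ κ) (r : ℕ) (hr : 2 ≤ r)
    (S : Type u) (hS : #S = Order.succ (expIter r κ))
    (C : Type u) (hC : #C ≤ κ) (f : Finset S → C) :
    ∃ H : Set S, #H = Order.succ κ ∧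
      ∀ t u : Finset S, ↑t ⊆ H → ↑u ⊆ H →
        t.card = r + 1 → u.card = r + 1 → f t = f u :=
  erdosRado_general κ hκ r S hS C hC f
end

section
/- (Erdős.) For every natural number k there exists a finite simple graph G whose chromatic number is strictly greater than k and whose girth (the length of its shortest cycle) is strictly greater than k. -/
/-!
Take the binomial random graph `G(n, p)` on `n = d ^ (k + 1)` vertices with edge probability
`p = d ^ (-k)`, where `d` is a large constant depending on `k`, so that the average degree is
about `n p = d`. A given vertex lies on at most `n ^ (l - 1)` potential cycles of length `l`, each
present with probability `p ^ l`; hence the expected number of vertices on cycles of length at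
most `k` is at most `d + ⋯ + d ^ k`, a small fraction of `n`. A union bound over vertex sets of size
`n / (2 k)` shows that with probability at least one half none of them is independent. Deleting
the vertices on short cycles from a suitable outcome leaves a graph on more than `n / 2` vertices
with no short cycle and no independent set of size `n / (2 k)`, so more than `k` colours are needed.
-/

open SimpleGraph MeasureTheory Measure ProbabilityTheory unitInterval
open scoped Finset

section Counting

variable {V : Type*} {k : ℕ}

theorem card_le_mul_indepNum_of_colorable [Fintype V] {G : SimpleGraph V} (h : G.Colorable k) :
    Fintype.card V ≤ k * G.indepNum := by
  classical
  obtain ⟨C⟩ := h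
  have hclass (i : Fin k) : #{v | C v = i} ≤ G.indepNum :=
    IsIndepSet.card_le_indepNum (by simpa using! C.isIndepSet_colorClass i)
  simpa [mul_comm] using Finset.card_le_mul_card_image_of_maps_to
    (fun v _ ↦ Finset.mem_univ (C v)) _ fun i _ ↦ hclass i

theorem lt_chromaticNumber_of_mul_indepNum_lt_card [Fintype V] {G : SimpleGraph V}
    (h : k * G.indepNum < Fintype.card V) : k < G.chromaticNumber := by
  rw [← not_le, chromaticNumber_le_iff_colorable]
  exact fun hG ↦ h.not_ge (card_le_mul_indepNum_of_colorable hG)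

theorem indepNum_induce_le [Finite V] (G : SimpleGraph V) (s : Set V) :
    (G.induce s).indepNum ≤ G.indepNum := by
  have := Fintype.ofFinite V
  obtain ⟨t, ht⟩ := (G.induce s).exists_isNIndepSet_indepNum
  rw [← ht.card_eq, ← t.card_map (.subtype _)]
  apply IsIndepSet.card_le_indepNum
  simpa [Set.InjOn.pairwise_image, Set.Pairwise] using ht.isIndepSet

theorem lt_chromaticNumber_induce_compl [Fintype V] {G : SimpleGraph V} {s : Set V}
    (h : k * G.indepNum + s.ncard < Fintype.card V) :
    k < (G.induce sᶜ).chromaticNumber := by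
  classical
  refine lt_chromaticNumber_of_mul_indepNum_lt_card ?_
  have hcard : s.ncard + Fintype.card ↥sᶜ = Fintype.card V := by
    rw [← Nat.card_eq_fintype_card, ← Nat.card_eq_fintype_card]
    exact Set.ncard_add_ncard_compl s
  have hindep : k * (G.induce sᶜ).indepNum ≤ k * G.indepNum :=
    Nat.mul_le_mul_left k (indepNum_induce_le G sᶜ)
  lia

theorem card_finsetWalkLength_succ_le_maxDegree_pow [Fintype V] [DecidableEq V] (G : SimpleGraph V)
    [DecidableRel G.Adj] (l : ℕ) (u v : V) :
    #(G.finsetWalkLength (l + 1) u v) ≤ G.maxDegree ^ l := by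
  induction l generalizing u with
  | zero =>
    rw [pow_zero, Finset.card_le_one]
    intro w hw w' hw'
    rw [mem_finsetWalkLength_iff] at hw hw'
    rcases w with _ | ⟨_, _ | _⟩ <;> rcases w' with _ | ⟨_, _ | _⟩ <;> simp_all
  | succ l ih =>
    calc #(G.finsetWalkLength (l + 2) u v)
        ≤ ∑ w : G.neighborSet u, #(G.finsetWalkLength (l + 1) w v) :=
          Finset.card_biUnion_le.trans_eq (by simp [finsetWalkLength])
      _ ≤ ∑ _w : G.neighborSet u, G.maxDegree ^ l := Finset.sum_le_sum fun w _ ↦ ih w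
      _ = G.degree u * G.maxDegree ^ l := by
          rw [Finset.sum_const, Finset.card_univ, card_neighborSet_eq_degree, smul_eq_mul]
      _ ≤ G.maxDegree ^ (l + 1) := by
          rw [pow_succ']
          gcongr
          exact G.degree_le_maxDegree u

theorem card_finsetWalkLength_succ_le_card_pow [Fintype V] [DecidableEq V] (G : SimpleGraph V)
    [DecidableRel G.Adj] (l : ℕ) (u v : V) :
    #(G.finsetWalkLength (l + 1) u v) ≤ Fintype.card V ^ l := by
  refine (card_finsetWalkLength_succ_le_maxDegree_pow G l u v).trans ?_
  gcongr
  exact maxDegree_le_of_forall_degree_le _ _ fun w ↦ (degree_lt_card_verts w).le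

end Counting

section ShortCycles

variable {V : Type*}

/-- The vertices of `G` lying on a cycle of length at most `k`, with a cycle encoded as a closed
walk based at the vertex. Deleting them destroys all short cycles. -/
def shortCycleVertices (G : SimpleGraph V) (k : ℕ) : Set V :=
  {v | ∃ w : G.Walk v v, w.IsCycle ∧ w.length ≤ k}

theorem lt_egirth_induce_compl_shortCycleVertices (G : SimpleGraph V) (k : ℕ) :
    k < (G.induce (shortCycleVertices G k)ᶜ).egirth := by
  rw [← ENat.add_one_le_iff (ENat.natCast_ne_top k), le_egirth]
  intro v w hw
  by_contra! hlt
  let f := Embedding.induce (G := G) (shortCycleVertices G k)ᶜ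
  have hlen : w.length ≤ k := by exact_mod_cast ENat.lt_natCast_add_one_iff.1 hlt
  exact v.2 ⟨w.map f.toHom, hw.map f.injective, (w.length_map _).trans_le hlen⟩

theorem lt_girth_of_lt_egirth {G : SimpleGraph V} {k : ℕ} (hG : ¬ G.IsAcyclic)
    (h : k < G.egirth) : k < G.girth := by
  rwa [← Nat.cast_lt (α := ℕ∞), girth, ENat.natCast_toNat (by simpa using hG)]

end ShortCycles

section RandomSets

variable {ι : Type*} {u : Set ι} {p : I} {s : Finset ι}

theorem setBernoulli_real_setOf_subset (hs : ↑s ⊆ u) :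
    setBer(u, p).real {t | ↑s ⊆ t} = p ^ #s := by
  have hpi : (fun q : ι → Prop ↦ {i | q i}) ⁻¹' {t | ↑s ⊆ t} =
      (s : Set ι).pi fun _ ↦ {True} := by
    ext q; simp [Set.subset_def]
  have hmem (i) (hi : i ∈ s) : i ∈ u := hs hi
  rw [measureReal_def, setBernoulli_apply', hpi, infinitePi_pi _ (by simp)]
  simp +contextual [hmem]

theorem setBernoulli_real_setOf_disjoint (hs : ↑s ⊆ u) :
    setBer(u, p).real {t | Disjoint ↑s t} = (1 - p : ℝ) ^ #s := by
  have hpi : (fun q : ι → Prop ↦ {i | q i}) ⁻¹' {t | Disjoint ↑s t} =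
      (s : Set ι).pi fun _ ↦ {False} := by
    ext q; simp [Set.disjoint_left]
  have hmem (i) (hi : i ∈ s) : i ∈ u := hs hi
  rw [measureReal_def, setBernoulli_apply', hpi, infinitePi_pi _ (by simp)]
  simp +contextual [hmem]

theorem integral_ncard {Ω : Type*} [MeasurableSpace Ω] {μ : Measure Ω} [IsFiniteMeasure μ]
    [Fintype ι] {S : Ω → Set ι} (hS : ∀ i, MeasurableSet {ω | i ∈ S ω}) :
    ∫ ω, ((S ω).ncard : ℝ) ∂μ = ∑ i, μ.real {ω | i ∈ S ω} := by
  classical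
  have hncard (ω : Ω) : ((S ω).ncard : ℝ) = ∑ i, {ω | i ∈ S ω}.indicator 1 ω := by
    rw [Set.ncard_eq_toFinset_card', ← Set.filter_mem_univ_eq_toFinset]
    simp [Set.indicator_apply]
  simp_rw [hncard]
  rw [integral_finsetSum _ fun i _ ↦ (integrable_const 1).indicator (hS i)]
  simp [integral_indicator_one, hS]

end RandomSets

section RandomGraph

variable {V : Type*} {p : I}

theorem binomialRandom_real_preimage_edgeSet [Countable V] (S : Set (Set (Sym2 V))) :
    G(V, p).real (edgeSet ⁻¹' S) = setBer(Sym2.diagSetᶜ, p).real S := by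
  have hrange : Set.range (edgeSet (V := V)) = {t | t ⊆ Sym2.diagSetᶜ} := by
    ext t
    refine ⟨?_, fun ht ↦ ⟨fromEdgeSet t, ?_⟩⟩
    · rintro ⟨G, rfl⟩
      exact edgeSet_subset_compl_diagSet G
    · simpa [Set.subset_compl_iff_disjoint_right] using ht
  rw [measureReal_def, measureReal_def, binomialRandom, measurableEmbedding_edgeSet.comap_preimage,
    setBernoulli_apply_eq_apply_subsets _ p S, hrange]
  rfl

theorem binomialRandom_real_forall_mem_edges_of_isTrail [Countable V] {u v : V}
    {w : (⊤ : SimpleGraph V).Walk u v} (hw : w.IsTrail) :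
    G(V, p).real {G | ∀ e ∈ w.edges, e ∈ G.edgeSet} = p ^ w.length := by
  classical
  have hdiag : (w.edges.toFinset : Set (Sym2 V)) ⊆ Sym2.diagSetᶜ := by
    intro e he
    simpa using w.edges_subset_edgeSet (List.mem_toFinset.1 he)
  rw [← w.length_edges, ← List.toFinset_card_of_nodup hw.edges_nodup,
    ← setBernoulli_real_setOf_subset hdiag, ← binomialRandom_real_preimage_edgeSet]
  simp [Set.subset_def]

theorem binomialRandom_real_isIndepSet [Countable V] (s : Finset V) :
    G(V, p).real {G | G.IsIndepSet s} = (1 - p : ℝ) ^ (#s).choose 2 := by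
  classical
  have hdiag :
      ((s.offDiag.image Sym2.mk.uncurry : Finset (Sym2 V)) : Set (Sym2 V)) ⊆ Sym2.diagSetᶜ := by
    intro e he
    obtain ⟨⟨a, b⟩, hab, rfl⟩ := Finset.mem_image.1 he
    exact (Finset.mem_offDiag.1 hab).2.2
  rw [← Sym2.card_image_offDiag, ← setBernoulli_real_setOf_disjoint hdiag,
    ← binomialRandom_real_preimage_edgeSet]
  congr 1
  ext G
  refine Iff.trans ?_ Set.disjoint_left.symm
  constructor
  · intro h e he
    obtain ⟨⟨a, b⟩, hab, rfl⟩ := Finset.mem_image.1 he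
    obtain ⟨ha, hb, hne⟩ := Finset.mem_offDiag.1 hab
    exact h ha hb hne
  · intro h a ha b hb hne hab
    exact h (Finset.mem_image.2 ⟨(a, b), Finset.mem_offDiag.2 ⟨ha, hb, hne⟩, rfl⟩) hab

theorem binomialRandom_real_le_indepNum_le [Fintype V] (m : ℕ) :
    G(V, p).real {G | m ≤ G.indepNum} ≤
      (Fintype.card V).choose m * (1 - p : ℝ) ^ m.choose 2 := by
  have hsub : {G : SimpleGraph V | m ≤ G.indepNum} ⊆
      ⋃ s ∈ (Finset.univ : Finset V).powersetCard m, {G | G.IsIndepSet s} := by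
    intro G hG
    obtain ⟨t, ht⟩ := G.exists_isNIndepSet_indepNum
    obtain ⟨s, hst, hs⟩ := Finset.exists_subset_card_eq (hG.trans_eq ht.card_eq.symm)
    simp only [Set.mem_iUnion, Finset.mem_powersetCard_univ]
    exact ⟨s, hs, ht.isIndepSet.mono hst⟩
  calc G(V, p).real {G | m ≤ G.indepNum}
      ≤ ∑ s ∈ (Finset.univ : Finset V).powersetCard m, G(V, p).real {G | G.IsIndepSet s} :=
        (measureReal_mono hsub (measure_ne_top _ _)).trans (measureReal_biUnion_finset_le _ _)
    _ = ∑ _s ∈ (Finset.univ : Finset V).powersetCard m, (1 - p : ℝ) ^ m.choose 2 :=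
        Finset.sum_congr rfl fun s hs ↦ by
          rw [binomialRandom_real_isIndepSet, (Finset.mem_powersetCard.1 hs).2]
    _ = _ := by simp

theorem binomialRandom_real_mem_shortCycleVertices_le [Fintype V] (v : V) (k : ℕ) :
    G(V, p).real {G | v ∈ shortCycleVertices G k} ≤
      ∑ l ∈ Finset.range k, (Fintype.card V : ℝ) ^ l * p ^ (l + 1) := by
  classical
  let closedTrails (l : ℕ) : Finset ((⊤ : SimpleGraph V).Walk v v) :=
    {w ∈ finsetWalkLength ⊤ l v v | w.IsTrail}
  have hsub : {G | v ∈ shortCycleVertices G k} ⊆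
      ⋃ l ∈ Finset.range k, ⋃ w ∈ closedTrails (l + 1), {G | ∀ e ∈ w.edges, e ∈ G.edgeSet} := by
    rintro G ⟨w, hw, hwk⟩
    have hpos := hw.three_le_length
    simp only [Set.mem_iUnion, Finset.mem_range]
    refine ⟨w.length - 1, by lia, w.mapLe le_top, ?_, fun e he ↦ ?_⟩
    · rw [Finset.mem_filter, mem_finsetWalkLength_iff, Walk.length_map]
      exact ⟨by lia, (hw.mapLe le_top).isTrail⟩
    · exact w.edges_subset_edgeSet (by simpa using he)
  have hcard (l : ℕ) : #(closedTrails (l + 1)) ≤ Fintype.card V ^ l :=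
    (Finset.card_filter_le _ _).trans (card_finsetWalkLength_succ_le_card_pow ⊤ l v v)
  calc G(V, p).real {G | v ∈ shortCycleVertices G k}
      ≤ ∑ l ∈ Finset.range k, ∑ w ∈ closedTrails (l + 1),
          G(V, p).real {G | ∀ e ∈ w.edges, e ∈ G.edgeSet} :=
        (measureReal_mono hsub (measure_ne_top _ _)).trans <|
          (measureReal_biUnion_finset_le _ _).trans <|
          Finset.sum_le_sum fun l _ ↦ measureReal_biUnion_finset_le _ _
    _ = ∑ l ∈ Finset.range k, #(closedTrails (l + 1)) * (p : ℝ) ^ (l + 1) := by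
        refine Finset.sum_congr rfl fun l _ ↦ ?_
        rw [← nsmul_eq_mul, ← Finset.sum_const]
        refine Finset.sum_congr rfl fun w hw ↦ ?_
        obtain ⟨hlen, htrail⟩ := Finset.mem_filter.1 hw
        rw [binomialRandom_real_forall_mem_edges_of_isTrail htrail, mem_finsetWalkLength_iff.1 hlen]
    _ ≤ _ := by
        gcongr with l
        · exact pow_nonneg p.2.1 _
        · exact_mod_cast hcard l

instance [Finite V] : DiscreteMeasurableSpace (SimpleGraph V) where
  forall_measurableSet _ := measurableEmbedding_edgeSet.measurableSet_image.1 .of_discrete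

theorem mul_binomialRandom_real_le_ncard_shortCycleVertices_le [Fintype V] (k a : ℕ) :
    a * G(V, p).real {G | a ≤ (shortCycleVertices G k).ncard} ≤
      ∑ l ∈ Finset.range k, (Fintype.card V * p : ℝ) ^ (l + 1) := by
  calc a * G(V, p).real {G | a ≤ (shortCycleVertices G k).ncard}
      ≤ ∫ G, ((shortCycleVertices G k).ncard : ℝ) ∂G(V, p) := by
        simpa using mul_meas_ge_le_integral_of_nonneg (μ := G(V, p))
          (ae_of_all _ fun G ↦ (shortCycleVertices G k).ncard.cast_nonneg) .of_finite (a : ℝ)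
    _ = ∑ v, G(V, p).real {G | v ∈ shortCycleVertices G k} := integral_ncard fun _ ↦ .of_discrete
    _ ≤ ∑ _v : V, ∑ l ∈ Finset.range k, (Fintype.card V : ℝ) ^ l * p ^ (l + 1) :=
        Finset.sum_le_sum fun v _ ↦ binomialRandom_real_mem_shortCycleVertices_le v k
    _ = _ := by
        rw [Finset.sum_const, nsmul_eq_mul, Finset.mul_sum]
        exact Finset.sum_congr rfl fun l _ ↦ by rw [Finset.card_univ]; ring

theorem exists_ncard_shortCycleVertices_lt_and_indepNum_lt [Fintype V] (p : I) {k a m : ℕ}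
    (ha : 0 < a)
    (h : (∑ l ∈ Finset.range k, (Fintype.card V * p : ℝ) ^ (l + 1)) / a +
      (Fintype.card V).choose m * (1 - p : ℝ) ^ m.choose 2 < 1) :
    ∃ G : SimpleGraph V, (shortCycleVertices G k).ncard < a ∧ G.indepNum < m := by
  by_contra! hbad
  have hcover : (Set.univ : Set (SimpleGraph V)) ⊆
      {G | a ≤ (shortCycleVertices G k).ncard} ∪ {G | m ≤ G.indepNum} := by
    intro G _
    exact (le_or_gt a _).imp id (hbad G)
  refine h.not_ge ?_
  calc (1 : ℝ) = G(V, p).real Set.univ := by simp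
    _ ≤ G(V, p).real {G | a ≤ (shortCycleVertices G k).ncard} +
          G(V, p).real {G | m ≤ G.indepNum} :=
        (measureReal_mono hcover).trans (measureReal_union_le _ _)
    _ ≤ _ := by
        gcongr
        · rw [le_div_iff₀' (by exact_mod_cast ha)]
          exact mul_binomialRandom_real_le_ncard_shortCycleVertices_le k a
        · exact binomialRandom_real_le_indepNum_le m

end RandomGraph

theorem choose_mul_one_sub_pow_le_half {n m e : ℕ} {p : ℝ} (hp : p ≤ 1)
    (h : n + 1 ≤ p * e) : n.choose m * (1 - p) ^ e ≤ 1 / 2 := by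
  have two_le_exp : (2 : ℝ) ≤ Real.exp 1 := by linarith [Real.add_one_le_exp 1]
  have hchoose : (n.choose m : ℝ) ≤ Real.exp 1 ^ n :=
    calc (n.choose m : ℝ) ≤ 2 ^ n := mod_cast n.choose_le_two_pow m
      _ ≤ Real.exp 1 ^ n := by gcongr
  calc n.choose m * (1 - p) ^ e
      ≤ Real.exp 1 ^ n * Real.exp (-p) ^ e := by
        gcongr
        exact Real.one_sub_le_exp_neg p
    _ = Real.exp (n - p * e) := by
        rw [← Real.exp_nat_mul, ← Real.exp_nat_mul, ← Real.exp_add]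
        ring_nf
    _ ≤ Real.exp (-1) := by gcongr; linarith
    _ ≤ 1 / 2 := by
        rw [Real.exp_neg, one_div]
        gcongr

theorem sum_range_pow_succ_le {x : ℝ} (hx : 1 ≤ x) (k : ℕ) :
    ∑ l ∈ Finset.range k, x ^ (l + 1) ≤ k * x ^ k := by
  simpa using Finset.sum_le_sum fun l (hl : l ∈ Finset.range k) ↦
    pow_le_pow_right₀ hx (Finset.mem_range.1 hl)

theorem exists_mul_indepNum_add_ncard_shortCycleVertices_lt {k : ℕ} (hk : 0 < k) :
    ∃ (n : ℕ) (G : SimpleGraph (Fin n)),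
      k * G.indepNum + (shortCycleVertices G k).ncard < n := by
  -- With `n = 2km` and `p = d ^ (-k)`, the value of `m` makes `p * m.choose 2` about `8km = 4n`,
  -- enough to beat `n.choose m ≤ 2 ^ n`, and the value of `d` then gives `n * p = d`.
  obtain ⟨d, hd⟩ : ∃ d, d = 32 * k ^ 2 := ⟨_, rfl⟩
  obtain ⟨m, hm⟩ : ∃ m, m = 16 * k * d ^ k := ⟨_, rfl⟩
  have hd0 : 0 < d := by rw [hd]; positivity
  have hdk : 1 ≤ d ^ k := Nat.one_le_pow _ _ hd0
  have hk1 : (1 : ℝ) ≤ k := by exact_mod_cast hk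
  have hm' : (m : ℝ) = 16 * k * d ^ k := by exact_mod_cast hm
  have hm0 : 0 < m := by rw [hm]; positivity
  have hm16 : (16 : ℝ) ≤ m := by
    have : (1 : ℝ) ≤ d ^ k := by exact_mod_cast hdk
    nlinarith
  let p : I := ⟨((d : ℝ) ^ k)⁻¹, by positivity, inv_le_one_of_one_le₀ (by exact_mod_cast hdk)⟩
  have hnp : ((2 * (k * m) : ℕ) : ℝ) * p = d := by
    simp only [p, Nat.cast_mul, hm', hd, Nat.cast_pow]
    field_simp
    norm_num
  have hcycles : (∑ l ∈ Finset.range k, ((2 * (k * m) : ℕ) * p : ℝ) ^ (l + 1)) / (k * m : ℕ)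
      < 1 / 2 := by
    have hsum := sum_range_pow_succ_le (x := d) (by exact_mod_cast hd0) k
    rw [hnp, div_lt_iff₀ (by positivity)]
    push_cast
    nlinarith
  have hindep : ((2 * (k * m)).choose m : ℝ) * (1 - p : ℝ) ^ m.choose 2 ≤ 1 / 2 := by
    refine choose_mul_one_sub_pow_le_half p.2.2 ?_
    have hpm : (p : ℝ) * m.choose 2 = 8 * k * (m - 1) := by
      rw [Nat.cast_choose_two]
      simp only [p, hm']
      field_simp
      ring
    rw [hpm]
    push_cast
    nlinarith
  obtain ⟨G, hG, hα⟩ := exists_ncard_shortCycleVertices_lt_and_indepNum_lt (V := Fin (2 * (k * m)))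
    (k := k) (a := k * m) (m := m) p (by positivity) (by rw [Fintype.card_fin]; linarith)
  have hkα : k * G.indepNum < k * m := by gcongr
  exact ⟨_, G, by lia⟩

/-- **Erdős.** For every `k` there is a finite simple graph whose chromatic number and girth
are both strictly greater than `k`. -/
theorem erdos_high_chromatic_high_girth (k : ℕ) :
    ∃ (V : Type) (_ : Fintype V) (G : SimpleGraph V),
      (k : ℕ∞) < G.chromaticNumber ∧ (k : ℕ∞) < G.girth := by
  classical
  -- The girth of an acyclic graph is `0` here, so `k ≥ 2` is needed to force a cycle below.
  wlog hk : 2 ≤ k generalizing k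
  · obtain ⟨V, hV, G, hχ, hg⟩ := this 2 le_rfl
    have hk2 : (k : ℕ∞) ≤ (2 : ℕ) := by exact_mod_cast (not_le.1 hk).le
    exact ⟨V, hV, G, hk2.trans_lt hχ, hk2.trans_lt hg⟩
  obtain ⟨n, G, hG⟩ := exists_mul_indepNum_add_ncard_shortCycleVertices_lt (k := k) (by lia)
  let H := G.induce (shortCycleVertices G k)ᶜ
  have hχ : k < H.chromaticNumber := lt_chromaticNumber_induce_compl (by simpa using hG)
  have hcyc : ¬ H.IsAcyclic := fun hH ↦
    (hχ.trans_le hH.chromaticNumber_le_two).not_ge (by exact_mod_cast hk)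
  refine ⟨_, inferInstance, H, hχ, ?_⟩
  exact_mod_cast lt_girth_of_lt_egirth hcyc (lt_egirth_induce_compl_shortCycleVertices G k)
end

section
/- (Condition (J4)_n for the Maddux algebra E_k(2,3).) Let n > 2 and let l, k be natural numbers with l ≥ 2n−1 and k ≥ (2n−1)l. Let I be a set of cardinality k. Then for all subsets V₂, …, V_n, W₂, …, W_n of I, each of cardinality l, there exists T ⊆ I with |T| = l such that for every i with 2 ≤ i ≤ n and all a ∈ V_i, b ∈ W_i, c ∈ T one has a ≤ b;c in E_k(2,3), i.e. ¬(a = b ∧ b = c). -/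
/-!
Since `a ≤ b;c` fails only for `a = b = c`, a set `T` is admissible for the pair `(Vᵢ, Wᵢ)` exactly
when it avoids `Vᵢ ∩ Wᵢ`. The `n - 1` intersections cover at most `(n - 1) * l` atoms, so `n * l`
atoms leave room for `T`.
-/

open Finset

theorem forall_not_eq_and_eq_iff_disjoint_inter {α : Type*} [DecidableEq α] {A B C : Finset α} :
    (∀ a ∈ A, ∀ b ∈ B, ∀ c ∈ C, ¬(a = b ∧ b = c)) ↔ Disjoint (A ∩ B) C := by
  rw [Finset.disjoint_left]
  constructor
  · intro h a hab hc
    exact h a (mem_of_mem_inter_left hab) a (mem_of_mem_inter_right hab) a hc ⟨rfl, rfl⟩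
  · rintro h a ha _ hb _ hc ⟨rfl, rfl⟩
    exact h (mem_inter_of_mem ha hb) hc

theorem exists_finset_card_eq_disjoint {α : Type*} {U : Finset α} {l : ℕ}
    (h : (#U + l : ℕ) ≤ ENat.card α) : ∃ T : Finset α, #T = l ∧ Disjoint U T := by
  obtain ⟨f, hf⟩ := Fin.Embedding.exists_embedding_disjoint_range_of_add_le_ENat_card
    (s := (U : Set α)) (n := l) (by simpa using h)
  exact ⟨univ.map f, by simp, by simpa [← Finset.disjoint_coe] using hf⟩

theorem maddux_J4_general {ι I : Type*} [DecidableEq I] {s : Finset ι} {V W : ι → Finset I}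
    {m l : ℕ} (hVW : ∀ i ∈ s, #(V i ∩ W i) ≤ m) (hI : (#s * m + l : ℕ) ≤ ENat.card I) :
    ∃ T : Finset I, #T = l ∧
      ∀ i ∈ s, ∀ a ∈ V i, ∀ b ∈ W i, ∀ c ∈ T, ¬(a = b ∧ b = c) := by
  have hU : #(s.biUnion fun i ↦ V i ∩ W i) ≤ #s * m := card_biUnion_le_card_mul _ _ _ hVW
  obtain ⟨T, hTl, hT⟩ := exists_finset_card_eq_disjoint
    ((Nat.cast_le.2 (Nat.add_le_add_right hU l)).trans hI)
  rw [disjoint_biUnion_left] at hT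
  exact ⟨T, hTl, fun i hi ↦ forall_not_eq_and_eq_iff_disjoint_inter.2 (hT i hi)⟩

/-- **Condition (J4)ₙ for the Maddux algebra `E_k(2,3)`.** In `E_k(2,3)` all triangles of
non-identity atoms are allowed except the monochromatic ones, so for non-identity atoms
`a ≤ b;c` iff `¬(a = b ∧ b = c)`.  If `n > 2`, `l ≥ 2n−1` and `k ≥ (2n−1)l`, and `I` is the
set of the `k` non-identity atoms, then for all `l`-element subsets `V₂,…,Vₙ,W₂,…,Wₙ` of `I`
there is an `l`-element subset `T` of `I` such that `a ≤ b;c` whenever `2 ≤ i ≤ n`,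
`a ∈ Vᵢ`, `b ∈ Wᵢ` and `c ∈ T`. -/
theorem maddux_J4 (n l k : ℕ) (hn : 2 < n) (hl : 2 * n - 1 ≤ l) (hk : (2 * n - 1) * l ≤ k)
    (I : Type*) [Fintype I] (hI : Fintype.card I = k)
    (V W : ℕ → Finset I)
    (hV : ∀ i, 2 ≤ i → i ≤ n → (V i).card = l)
    (hW : ∀ i, 2 ≤ i → i ≤ n → (W i).card = l) :
    ∃ T : Finset I, T.card = l ∧
      ∀ i, 2 ≤ i → i ≤ n → ∀ a ∈ V i, ∀ b ∈ W i, ∀ c ∈ T, ¬(a = b ∧ b = c) := by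
  classical
  have hnl : #(Icc 2 n) * l + l ≤ k := by
    rw [Nat.card_Icc, ← Nat.succ_mul]
    exact (Nat.mul_le_mul_right l (by omega)).trans hk
  have hVW : ∀ i ∈ Icc 2 n, #(V i ∩ W i) ≤ l := fun i hi ↦
    (card_le_card inter_subset_left).trans (hV i (mem_Icc.1 hi).1 (mem_Icc.1 hi).2).le
  have hI' : (#(Icc 2 n) * l + l : ℕ) ≤ ENat.card I := by
    rwa [ENat.card_eq_coe_fintype_card, hI, Nat.cast_le]
  simpa only [mem_Icc, and_imp] using maddux_J4_general hVW hI'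
end

section
/- Let n ≥ 2, let U be a set, and let B be a field of subsets of U that is atomless as a Boolean algebra and separates points. Let A be the collection of all finite unions of rectangles X₁ × ⋯ × X_n with each X_i ∈ B. Then: (i) A is a field of subsets of ⁿU (closed under finite unions, intersections and complementation, containing ∅ and ⁿU); (ii) the family S = { X × (U∖X) × U × ⋯ × U : X ∈ B } has least upper bound ⁿU in the Boolean algebra A (every W ∈ A containing every member of S equals ⁿU); (iii) defining s₀¹(Z) = { s ∈ ⁿU : (s₁, s₁, s₂, …, s_{n−1}) ∈ Z }, one has s₀¹(W) = ∅ for every W ∈ S, while s₀¹(ⁿU) = ⁿU. Consequently the substitution operation s₀¹ on A is not completely additive: s₀¹(sup S) = ⁿU ≠ ∅ = sup { s₀¹(W) : W ∈ S }. -/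
/-- A field of subsets of `U`: contains `∅` and `U` and is closed under finite unions,
finite intersections and complementation. -/
def IsFieldOfSets {U : Type*} (B : Set (Set U)) : Prop :=
  ∅ ∈ B ∧ Set.univ ∈ B ∧ (∀ X ∈ B, ∀ Y ∈ B, X ∪ Y ∈ B) ∧
    (∀ X ∈ B, ∀ Y ∈ B, X ∩ Y ∈ B) ∧ (∀ X ∈ B, Xᶜ ∈ B)

/-- The collection of finite unions of rectangles `X₁ × ⋯ × Xₙ` with all sides in `B`. -/
def rectUnions {U : Type*} (B : Set (Set U)) (n : ℕ) : Set (Set (Fin n → U)) :=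
  {W | ∃ (m : ℕ) (X : Fin m → Fin n → Set U),
    (∀ j i, X j i ∈ B) ∧ W = ⋃ j, {s | ∀ i, s i ∈ X j i}}

/-- The family `S = { X × (U∖X) × U × ⋯ × U : X ∈ B }`. -/
def stripes {U : Type*} (B : Set (Set U)) (n : ℕ) (hn : 2 ≤ n) : Set (Set (Fin n → U)) :=
  {W | ∃ X ∈ B, W = {s : Fin n → U | s ⟨0, by omega⟩ ∈ X ∧ s ⟨1, by omega⟩ ∉ X}}

/-- The diagonal-free substitution `s₀¹`, replacing the 0th coordinate by the 1st:
`s₀¹(Z) = { s : (s₁, s₁, s₂, …, s_{n−1}) ∈ Z }`. -/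
def sub01 {U : Type*} (n : ℕ) (hn : 2 ≤ n) (Z : Set (Fin n → U)) : Set (Fin n → U) :=
  {s | Function.update s ⟨0, by omega⟩ (s ⟨1, by omega⟩) ∈ Z}

/- The union of `S` is the complement of the diagonal `D₀₁ = {s | s₀ = s₁}`. Since `B` is atomless,
no nonempty rectangle lies inside `D₀₁`; hence `D₀₁` contains no nonempty member of `A`, and `S` has
supremum `ⁿU`. But `s₀¹(Z)` only depends on `Z ∩ D₀₁`, which is empty for every `Z ∈ S`. -/

section

open Set MeasureTheory

theorem isFieldOfSets_iff_isSetAlgebra {U : Type*} {B : Set (Set U)} :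
    IsFieldOfSets B ↔ IsSetAlgebra B where
  mp := fun ⟨hempty, _, hunion, _, hcompl⟩ ↦
    ⟨hempty, fun X hX ↦ hcompl X hX, fun X Y hX hY ↦ hunion X hX Y hY⟩
  mpr h := ⟨h.empty_mem, h.univ_mem, fun _ hX _ hY ↦ h.union_mem hX hY,
    fun _ hX _ hY ↦ h.inter_mem hX hY, fun _ hX ↦ h.compl_mem hX⟩

theorem nontrivial_of_nonempty_ssubset {α : Type*} {s t : Set α} (hs : s.Nonempty) (hst : s ⊂ t) :
    t.Nontrivial := by
  obtain ⟨x, hx⟩ := hs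
  obtain ⟨y, hyt, hys⟩ := exists_of_ssubset hst
  exact nontrivial_of_mem_mem_ne (hst.subset hx) hyt (ne_of_mem_of_not_mem hx hys)

/-- The diagonal element `Dᵢⱼ` of cylindric set algebras. It need not belong to the rectangle
algebra; it serves to compare `stripes` with `sub01`. -/
def diagonalElement {ι : Type*} (U : Type*) (i j : ι) : Set (ι → U) :=
  {s | s i = s j}

theorem mem_diagonalElement {ι U : Type*} {i j : ι} {s : ι → U} :
    s ∈ diagonalElement U i j ↔ s i = s j :=
  Iff.rfl

theorem exists_mem_univ_pi_notMem_diagonalElement {ι U : Type*} {i j : ι} (hij : i ≠ j)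
    {t : ι → Set U} (ht : (univ.pi t).Nonempty) (hti : (t i).Nontrivial) :
    ∃ s ∈ univ.pi t, s ∉ diagonalElement U i j := by
  classical
  obtain ⟨s, hs⟩ := ht
  obtain ⟨v, hv, hvj⟩ := hti.exists_ne (s j)
  refine ⟨Function.update s i v, (update_mem_pi_iff_of_mem hs).2 fun _ ↦ hv, ?_⟩
  simpa [mem_diagonalElement, hij.symm] using hvj

/-- De Morgan followed by distributivity: `f` chooses, for each box, a coordinate that leaves it. -/
theorem compl_iUnion_univ_pi {ι κ : Type*} {α : ι → Type*} (X : κ → ∀ i, Set (α i)) :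
    (⋃ k, univ.pi (X k))ᶜ = ⋃ f : κ → ι, univ.pi fun i ↦ ⋂ k, ⋂ _ : f k = i, (X k i)ᶜ := by
  ext s
  simp only [mem_compl_iff, mem_iUnion, mem_univ_pi, mem_iInter, not_exists, not_forall,
    Classical.skolem]
  exact exists_congr fun f ↦ ⟨fun h i k hki ↦ hki ▸ h k, fun h k ↦ h (f k) k rfl⟩

section rectUnions

variable {U : Type*} {B : Set (Set U)} {n : ℕ}

theorem mem_rectUnions {W : Set (Fin n → U)} :
    W ∈ rectUnions B n ↔
      ∃ (m : ℕ) (X : Fin m → Fin n → Set U), (∀ k i, X k i ∈ B) ∧ W = ⋃ k, univ.pi (X k) := by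
  simp [rectUnions, pi]

theorem iUnion_univ_pi_mem_rectUnions {κ : Type*} [Finite κ] {X : κ → Fin n → Set U}
    (hX : ∀ k i, X k i ∈ B) : ⋃ k, univ.pi (X k) ∈ rectUnions B n := by
  obtain ⟨m, ⟨e⟩⟩ := Finite.exists_equiv_fin κ
  exact mem_rectUnions.2 ⟨m, X ∘ e.symm, fun k ↦ hX (e.symm k),
    (e.symm.surjective.iUnion_comp fun k ↦ univ.pi (X k)).symm⟩

theorem union_mem_rectUnions {V W : Set (Fin n → U)} (hV : V ∈ rectUnions B n)
    (hW : W ∈ rectUnions B n) : V ∪ W ∈ rectUnions B n := by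
  obtain ⟨a, X, hX, rfl⟩ := mem_rectUnions.1 hV
  obtain ⟨b, Y, hY, rfl⟩ := mem_rectUnions.1 hW
  have hXY : ⋃ k, univ.pi (Sum.elim X Y k) ∈ rectUnions B n :=
    iUnion_univ_pi_mem_rectUnions (Sum.forall.2 ⟨hX, hY⟩)
  simpa only [iUnion_sum, Sum.elim_inl, Sum.elim_inr] using hXY

theorem compl_mem_rectUnions (hB : IsSetAlgebra B) {W : Set (Fin n → U)}
    (hW : W ∈ rectUnions B n) : Wᶜ ∈ rectUnions B n := by
  obtain ⟨m, X, hX, rfl⟩ := mem_rectUnions.1 hW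
  rw [compl_iUnion_univ_pi]
  refine iUnion_univ_pi_mem_rectUnions fun f i ↦ ?_
  simpa using hB.biInter_mem {k | f k = i} fun k _ ↦ hB.compl_mem (hX k i)

theorem isSetAlgebra_rectUnions (hB : IsSetAlgebra B) : IsSetAlgebra (rectUnions B n) where
  empty_mem := by
    simpa using iUnion_univ_pi_mem_rectUnions (B := B) (X := (Empty.elim : Empty → Fin n → Set U))
  compl_mem _ hW := compl_mem_rectUnions hB hW
  union_mem _ _ hV hW := union_mem_rectUnions hV hW

theorem eval_preimage_mem_rectUnions (huniv : univ ∈ B) {X : Set U} (hX : X ∈ B) (i : Fin n) :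
    Function.eval i ⁻¹' X ∈ rectUnions B n := by
  rw [← univ_pi_update_univ, ← iUnion_const (ι := Unit) (univ.pi _)]
  refine iUnion_univ_pi_mem_rectUnions fun _ ↦ ?_
  exact (Function.forall_update_iff _ fun _ Y ↦ Y ∈ B).2 ⟨hX, fun _ _ ↦ huniv⟩

theorem exists_mem_notMem_diagonalElement_of_mem_rectUnions
    (hnontrivial : ∀ X ∈ B, X.Nonempty → X.Nontrivial) {i j : Fin n} (hij : i ≠ j)
    {W : Set (Fin n → U)} (hW : W ∈ rectUnions B n) (hne : W.Nonempty) :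
    ∃ s ∈ W, s ∉ diagonalElement U i j := by
  obtain ⟨m, X, hX, rfl⟩ := mem_rectUnions.1 hW
  obtain ⟨k, hk⟩ := nonempty_iUnion.1 hne
  have hki : (X k i).Nontrivial := hnontrivial _ (hX k i) (univ_pi_nonempty_iff.1 hk i)
  obtain ⟨s, hs, hsij⟩ := exists_mem_univ_pi_notMem_diagonalElement hij hk hki
  exact ⟨s, mem_iUnion_of_mem k hs, hsij⟩

theorem eq_univ_of_compl_diagonalElement_subset (hB : IsSetAlgebra B)
    (hnontrivial : ∀ X ∈ B, X.Nonempty → X.Nontrivial) {i j : Fin n} (hij : i ≠ j)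
    {W : Set (Fin n → U)} (hW : W ∈ rectUnions B n) (hsub : (diagonalElement U i j)ᶜ ⊆ W) :
    W = univ := by
  by_contra hne
  obtain ⟨s, hsW, hsij⟩ := exists_mem_notMem_diagonalElement_of_mem_rectUnions hnontrivial hij
    (compl_mem_rectUnions hB hW) (nonempty_compl.2 hne)
  exact hsW (hsub hsij)

end rectUnions

section stripes

variable {U : Type*} {B : Set (Set U)} {n : ℕ} (hn : 2 ≤ n)

theorem stripes_subset_rectUnions (hB : IsSetAlgebra B) : stripes B n hn ⊆ rectUnions B n := by
  rintro _ ⟨X, hX, rfl⟩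
  exact (isSetAlgebra_rectUnions hB).inter_mem
    (eval_preimage_mem_rectUnions hB.univ_mem hX ⟨0, by omega⟩)
    (eval_preimage_mem_rectUnions hB.univ_mem (hB.compl_mem hX) ⟨1, by omega⟩)

theorem disjoint_diagonalElement_of_mem_stripes {W : Set (Fin n → U)} (hW : W ∈ stripes B n hn) :
    Disjoint W (diagonalElement U ⟨0, by omega⟩ ⟨1, by omega⟩) := by
  obtain ⟨X, -, rfl⟩ := hW
  exact disjoint_left.2 fun s ⟨h0, h1⟩ hs ↦ h1 (hs ▸ h0)

theorem compl_diagonalElement_subset_sUnion_stripes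
    (hsep : ∀ u v : U, u ≠ v → ∃ X ∈ B, u ∈ X ∧ v ∉ X) :
    (diagonalElement U ⟨0, by omega⟩ ⟨1, by omega⟩)ᶜ ⊆ ⋃₀ stripes B n hn := by
  intro s hs
  obtain ⟨X, hX, hmem⟩ := hsep _ _ hs
  exact ⟨_, ⟨X, hX, rfl⟩, hmem⟩

theorem sub01_eq_empty_of_disjoint_diagonalElement {Z : Set (Fin n → U)}
    (hZ : Disjoint Z (diagonalElement U ⟨0, by omega⟩ ⟨1, by omega⟩)) : sub01 n hn Z = ∅ :=
  eq_empty_of_forall_notMem fun s hs ↦ disjoint_left.1 hZ hs (by simp [mem_diagonalElement])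

end stripes

end

/-- The AGNS example witnessing failure of complete additivity of `s₀¹` (and of the omitting
types theorem for `Df_n`): for an atomless point-separating field `B` of subsets of `U` and
`n ≥ 2`, the finite unions of `B`-rectangles form a field of subsets `A` of `ⁿU`; the family
`S` of sets `X × (U∖X) × U × ⋯ × U` lies in `A` and has least upper bound `ⁿU` in `A`; and
`s₀¹(W) = ∅` for every `W ∈ S` while `s₀¹(ⁿU) = ⁿU ≠ ∅`, so `s₀¹` is not completely
additive on `A`. -/
theorem rectangle_algebra_not_completely_additive
    (n : ℕ) (hn : 2 ≤ n) (U : Type u) [Nonempty U] (B : Set (Set U))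
    (hB : IsFieldOfSets B)
    (hatomless : ∀ X ∈ B, X.Nonempty → ∃ Y ∈ B, Y.Nonempty ∧ Y ⊂ X)
    (hsep : ∀ u v : U, u ≠ v → ∃ X ∈ B, u ∈ X ∧ v ∉ X) :
    -- (i) `A` is a field of subsets of `ⁿU`
    IsFieldOfSets (rectUnions B n) ∧
    -- (ii) `S ⊆ A` and the least upper bound of `S` in `A` is `ⁿU`
    stripes B n hn ⊆ rectUnions B n ∧
    (∀ W ∈ rectUnions B n, (∀ Z ∈ stripes B n hn, Z ⊆ W) → W = Set.univ) ∧
    -- (iii) `s₀¹` kills every member of `S` but fixes `ⁿU`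
    (∀ W ∈ stripes B n hn, sub01 n hn W = ∅) ∧
    sub01 n hn (Set.univ : Set (Fin n → U)) = Set.univ ∧
    (Set.univ : Set (Fin n → U)) ≠ ∅ := by
  have hBalg := isFieldOfSets_iff_isSetAlgebra.1 hB
  have hnontrivial : ∀ X ∈ B, X.Nonempty → X.Nontrivial := fun X hX hne ↦
    let ⟨_, _, hY, hYX⟩ := hatomless X hX hne
    nontrivial_of_nonempty_ssubset hY hYX
  refine ⟨isFieldOfSets_iff_isSetAlgebra.2 (isSetAlgebra_rectUnions hBalg),
    stripes_subset_rectUnions hn hBalg, fun W hW hS ↦ ?_, fun W hW ↦ ?_, rfl,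
    Set.univ_nonempty.ne_empty⟩
  · exact eq_univ_of_compl_diagonalElement_subset hBalg hnontrivial (by simp) hW
      ((compl_diagonalElement_subset_sUnion_stripes hn hsep).trans (Set.sUnion_subset hS))
  · exact sub01_eq_empty_of_disjoint_diagonalElement hn
      (disjoint_diagonalElement_of_mem_stripes hn hW)
end

section
/- Let α ≥ 2 be an ordinal, U an infinite set, p ∈ ᵅU, and let V = { s ∈ ᵅU : { i < α : s(i) ≠ p(i) } is finite } be the corresponding weak space. Let κ be an infinite cardinal, fix i* ∈ κ and set J = κ ∖ {i*}. Suppose (Q_n)_{n<κ} is a partition of V into nonempty sets with Q_{i*} = { s ∈ V : s(0) = s(1) }. Let F be a nonprincipal ultrafilter on J, and for X ⊆ J define R_X = ⋃{ Q_k : k ∈ X } if X ∉ F and R_X = ⋃{ Q_k : k ∈ X ∪ {i*} } if X ∈ F. Let A = { R_X : X ⊆ J }. Then: (i) A is a field of subsets of V (in particular V ∖ R_X = R_{J∖X}, R_X ∪ R_Y = R_{X∪Y}, R_X ∩ R_Y = R_{X∩Y}); (ii) A is atomic, and its atoms are exactly the sets Q_k = R_{{k}} for k ∈ J; (iii) the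 least upper bound in A of the set of atoms { Q_k : k ∈ J } is V; (iv) defining s₀¹(Z) = { s ∈ V : s⁰₁ ∈ Z }, where s⁰₁ agrees with s except that s⁰₁(0) = s(1), the family A is closed under s₀¹ (indeed s₀¹(R_X) = V if X ∈ F and s₀¹(R_X) = ∅ if X ∉ F), s₀¹(Q_k) = ∅ for every k ∈ J, and s₀¹(V) = V. Consequently s₀¹ is not completely additive on A: s₀¹ of the supremum of the atoms is V, while the supremum of the s₀¹-images of the atoms is ∅. -/
open Set

/-- The weak space `ᵅU^{(p)}`: functions from (the ordinals below) `α` to `U` that differ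
from `p` in only finitely many coordinates. -/
def weakSpace (α : Ordinal.{0}) (U : Type*) (p : {i : Ordinal.{0} // i < α} → U) :
    Set ({i : Ordinal.{0} // i < α} → U) :=
  {s | {i | s i ≠ p i}.Finite}

open Classical in
/-- The element `R_X` of the algebra: `⋃{ Q_k : k ∈ X }` if `X ∉ F`, and
`⋃{ Q_k : k ∈ X ∪ {i*} }` if `X ∈ F` (here the distinguished index `i*` is `none` and the
remaining indices `J` make up the type `J`). -/
noncomputable def Rfam {J W : Type*} (Q : Option J → Set W) (F : Ultrafilter J)
    (X : Set J) : Set W :=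
  (⋃ k ∈ X, Q (some k)) ∪ (if X ∈ F then Q none else ∅)

open Classical in
/-- The substitution `s₀¹` relativized to the unit `V`:
`s₀¹(Z) = { s ∈ V : s⁰₁ ∈ Z }` where `s⁰₁` agrees with `s` except `s⁰₁(0) = s(1)`. -/
noncomputable def substW {ι U : Type*} (i0 i1 : ι) (V : Set (ι → U)) (Z : Set (ι → U)) : Set (ι → U) :=
  {s | s ∈ V ∧ Function.update s i0 (s i1) ∈ Z}

/-! Every block `Q k` determines an ultrafilter on `J`, namely `F` for the distinguished index and a
principal one for each `j ∈ J`, and `R_X` is the union of the blocks whose ultrafilter contains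
`X`; hence `X ↦ R_X` is a Boolean homomorphism. As `F` contains no singleton, the atoms
`R_{j} = Q_j` all miss `Q_{i*}`, yet an `R_X` containing all of them has `X = J ∈ F` and so contains
`Q_{i*}` too. Finally, `s ↦ s⁰₁` maps `V` into the diagonal `Q_{i*}`, so `s₀¹` sends `R_X` to `V` or
to `∅` according to whether `R_X` contains `Q_{i*}` or is disjoint from it. -/

section Ultrafilter

variable {J : Type*}

/-- The ultrafilter on `J` attached to the block `Q k`: `F` for the distinguished index, and the
principal ultrafilter at `j` for `j ∈ J`. When the blocks are nonempty and pairwise disjoint, it is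
`{X | Q k ⊆ R_X}`. -/
def blockUltrafilter (F : Ultrafilter J) : Option J → Ultrafilter J
  | none => F
  | some j => pure j

lemma singleton_mem_blockUltrafilter_iff {F : Ultrafilter J} {j : J} (hj : {j} ∉ F)
    {k : Option J} : {j} ∈ blockUltrafilter F k ↔ k = some j := by
  cases k <;> simp [blockUltrafilter, hj]

end Ultrafilter

section Rfam

variable {J W : Type*} {Q : Option J → Set W} {F : Ultrafilter J} {X Y : Set J} {j : J}
  {k : Option J} {w : W}

lemma mem_Rfam_iff_exists : w ∈ Rfam Q F X ↔ ∃ k, X ∈ blockUltrafilter F k ∧ w ∈ Q k := by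
  by_cases hX : X ∈ F <;> simp [Rfam, Option.exists, blockUltrafilter, hX, or_comm]

lemma mem_Rfam_iff_of_mem (hQ : Pairwise (Function.onFun Disjoint Q)) (hw : w ∈ Q k) :
    w ∈ Rfam Q F X ↔ X ∈ blockUltrafilter F k := by
  rw [mem_Rfam_iff_exists]
  refine ⟨fun ⟨l, hX, hl⟩ ↦ ?_, fun hX ↦ ⟨k, hX, hw⟩⟩
  rwa [hQ.eq (not_disjoint_iff.2 ⟨w, hw, hl⟩)]

@[simp]
lemma Rfam_empty : Rfam Q F ∅ = ∅ := by
  ext w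
  simp [mem_Rfam_iff_exists]

lemma Rfam_univ : Rfam Q F univ = ⋃ k, Q k := by
  have huniv (k : Option J) : univ ∈ blockUltrafilter F k := Filter.univ_mem
  ext w
  simp only [mem_Rfam_iff_exists, huniv, true_and, mem_iUnion]

lemma Rfam_union : Rfam Q F (X ∪ Y) = Rfam Q F X ∪ Rfam Q F Y := by
  ext w
  simp only [mem_union, mem_Rfam_iff_exists, Ultrafilter.union_mem_iff, or_and_right, exists_or]

lemma Rfam_mono (hXY : X ⊆ Y) : Rfam Q F X ⊆ Rfam Q F Y := by
  rw [← union_eq_self_of_subset_left hXY, Rfam_union]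
  exact subset_union_left

lemma Rfam_singleton (hj : {j} ∉ F) : Rfam Q F {j} = Q (some j) := by
  ext w
  simp only [mem_Rfam_iff_exists, singleton_mem_blockUltrafilter_iff hj, exists_eq_left]

lemma Rfam_inter (hQ : Pairwise (Function.onFun Disjoint Q)) :
    Rfam Q F (X ∩ Y) = Rfam Q F X ∩ Rfam Q F Y := by
  refine (subset_inter (Rfam_mono inter_subset_left) (Rfam_mono inter_subset_right)).antisymm ?_
  rintro w ⟨hX, hY⟩
  obtain ⟨k, hXk, hw⟩ := mem_Rfam_iff_exists.1 hX
  have hYk := (mem_Rfam_iff_of_mem hQ hw).1 hY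
  exact mem_Rfam_iff_exists.2 ⟨k, Filter.inter_mem hXk hYk, hw⟩

lemma iUnion_sdiff_Rfam (hQ : Pairwise (Function.onFun Disjoint Q)) :
    (⋃ k, Q k) \ Rfam Q F X = Rfam Q F Xᶜ := by
  have hdisj : Disjoint (Rfam Q F X) (Rfam Q F Xᶜ) := by
    rw [disjoint_iff_inter_eq_empty, ← Rfam_inter hQ, inter_compl_self, Rfam_empty]
  rw [← Rfam_univ (F := F), ← union_compl_self X, Rfam_union, union_sdiff_left,
    hdisj.sdiff_eq_right]

lemma block_subset_Rfam (hX : X ∈ blockUltrafilter F k) : Q k ⊆ Rfam Q F X :=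
  fun _ hw ↦ mem_Rfam_iff_exists.2 ⟨k, hX, hw⟩

lemma disjoint_block_Rfam (hQ : Pairwise (Function.onFun Disjoint Q))
    (hX : X ∉ blockUltrafilter F k) : Disjoint (Q k) (Rfam Q F X) :=
  disjoint_left.2 fun _ hw hwX ↦ hX ((mem_Rfam_iff_of_mem hQ hw).1 hwX)

lemma block_some_subset_Rfam_iff (hQ : Pairwise (Function.onFun Disjoint Q))
    (hne : (Q (some j)).Nonempty) : Q (some j) ⊆ Rfam Q F X ↔ j ∈ X := by
  refine ⟨fun h ↦ ?_, block_subset_Rfam (k := some j)⟩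
  obtain ⟨w, hw⟩ := hne
  exact (mem_Rfam_iff_of_mem hQ hw).1 (h hw)

lemma Rfam_subset_Rfam_iff (hQ : Pairwise (Function.onFun Disjoint Q))
    (hne : ∀ j, (Q (some j)).Nonempty) : Rfam Q F X ⊆ Rfam Q F Y ↔ X ⊆ Y := by
  refine ⟨fun h j hj ↦ ?_, Rfam_mono⟩
  exact (block_some_subset_Rfam_iff hQ (hne j)).1
    (((block_some_subset_Rfam_iff hQ (hne j)).2 hj).trans h)

lemma Rfam_eq_empty_or_eq_of_subset_singleton (hQ : Pairwise (Function.onFun Disjoint Q))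
    (hne : ∀ j, (Q (some j)).Nonempty) (h : Rfam Q F X ⊆ Rfam Q F {j}) :
    Rfam Q F X = ∅ ∨ Rfam Q F X = Rfam Q F {j} := by
  rcases subset_singleton_iff_eq.1 ((Rfam_subset_Rfam_iff hQ hne).1 h) with rfl | rfl
  · exact .inl Rfam_empty
  · exact .inr rfl

lemma exists_Rfam_singleton_subset (h : (Rfam Q F X).Nonempty) :
    ∃ j, Rfam Q F {j} ⊆ Rfam Q F X := by
  have hX : X.Nonempty := by
    rw [nonempty_iff_ne_empty]
    rintro rfl
    simp at h
  obtain ⟨j, hj⟩ := hX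
  exact ⟨j, Rfam_mono (singleton_subset_iff.2 hj)⟩

lemma Rfam_eq_iUnion_of_forall_block_some_subset (hQ : Pairwise (Function.onFun Disjoint Q))
    (hne : ∀ j, (Q (some j)).Nonempty) (h : ∀ j, Q (some j) ⊆ Rfam Q F X) :
    Rfam Q F X = ⋃ k, Q k := by
  have hX : X = univ :=
    eq_univ_of_forall fun j ↦ (block_some_subset_Rfam_iff hQ (hne j)).1 (h j)
  rw [hX, Rfam_univ]

end Rfam

section Substitution

variable {ι U : Type*} [DecidableEq ι] {i0 i1 : ι} {V Z D : Set (ι → U)}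

lemma mem_substW {s : ι → U} :
    s ∈ substW i0 i1 V Z ↔ s ∈ V ∧ Function.update s i0 (s i1) ∈ Z := by
  rw [substW, mem_ofPred_eq]
  congr!

lemma substW_eq_of_mapsTo (h : MapsTo (fun s ↦ Function.update s i0 (s i1)) V Z) :
    substW i0 i1 V Z = V :=
  Subset.antisymm (fun _ hs ↦ (mem_substW.1 hs).1) fun _ hs ↦ mem_substW.2 ⟨hs, h hs⟩

lemma substW_eq_empty_of_mapsTo (h : MapsTo (fun s ↦ Function.update s i0 (s i1)) V D)
    (hDZ : Disjoint D Z) : substW i0 i1 V Z = ∅ :=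
  eq_empty_of_forall_notMem fun _ hs ↦
    have ⟨hsV, hsZ⟩ := mem_substW.1 hs
    disjoint_left.1 hDZ (h hsV) hsZ

lemma mapsTo_update_diagonal (hi : i0 ≠ i1)
    (hV : MapsTo (fun s ↦ Function.update s i0 (s i1)) V V) :
    MapsTo (fun s ↦ Function.update s i0 (s i1)) V {s ∈ V | s i0 = s i1} :=
  fun s hs ↦ ⟨hV hs, by simp [hi.symm]⟩

lemma update_mem_weakSpace {α : Ordinal.{0}} [DecidableEq {i // i < α}] {p s : {i // i < α} → U}
    (hs : s ∈ weakSpace α U p) (i : {i // i < α}) (u : U) :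
    Function.update s i u ∈ weakSpace α U p := by
  refine (hs.insert i).subset fun l hl ↦ ?_
  by_cases hli : l = i
  · exact .inl hli
  · exact .inr (by simpa [hli] using hl)

end Substitution

theorem weak_space_atomic_not_completely_additive_general
    {ι U J : Type*} [DecidableEq ι] {i0 i1 : ι} (hi : i0 ≠ i1) {V : Set (ι → U)}
    (hV : MapsTo (fun s ↦ Function.update s i0 (s i1)) V V)
    {Q : Option J → Set (ι → U)} (hQne : ∀ j, (Q (some j)).Nonempty)
    (hQdisj : Pairwise (Function.onFun Disjoint Q)) (hQunion : ⋃ k, Q k = V)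
    (hQid : Q none = {s ∈ V | s i0 = s i1}) {F : Ultrafilter J} (hF : ∀ j : J, {j} ∉ F) :
    ((∀ X : Set J, V \ Rfam Q F X = Rfam Q F Xᶜ) ∧
     (∀ X Y : Set J, Rfam Q F (X ∪ Y) = Rfam Q F X ∪ Rfam Q F Y) ∧
     (∀ X Y : Set J, Rfam Q F (X ∩ Y) = Rfam Q F X ∩ Rfam Q F Y) ∧
     Rfam Q F Set.univ = V ∧ Rfam Q F ∅ = ∅) ∧
    ((∀ k : J, Rfam Q F {k} = Q (some k)) ∧
     (∀ (k : J) (X : Set J), Rfam Q F X ⊆ Rfam Q F {k} →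
        Rfam Q F X = ∅ ∨ Rfam Q F X = Rfam Q F {k}) ∧
     (∀ X : Set J, (Rfam Q F X).Nonempty → ∃ k : J, Rfam Q F {k} ⊆ Rfam Q F X)) ∧
    ((∀ k : J, Q (some k) ⊆ V) ∧
     (∀ X : Set J, (∀ k : J, Q (some k) ⊆ Rfam Q F X) → Rfam Q F X = V)) ∧
    ((∀ X : Set J, X ∈ F →
        substW i0 i1 V (Rfam Q F X) = V) ∧
     (∀ X : Set J, X ∉ F → substW i0 i1 V (Rfam Q F X) = ∅) ∧
     (∀ k : J, substW i0 i1 V (Q (some k)) = ∅) ∧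
     substW i0 i1 V V = V ∧
     V ≠ ∅) := by
  have hdiag : MapsTo (fun s ↦ Function.update s i0 (s i1)) V (Q none) :=
    hQid ▸ mapsTo_update_diagonal hi hV
  have hQV (k : Option J) : Q k ⊆ V := hQunion ▸ subset_iUnion Q k
  have hsubst_empty (X : Set J) (hX : X ∉ F) : substW i0 i1 V (Rfam Q F X) = ∅ :=
    substW_eq_empty_of_mapsTo hdiag (disjoint_block_Rfam hQdisj hX)
  have hV_ne : V.Nonempty := F.neBot.nonempty.elim fun j ↦ (hQne j).mono (hQV _)
  refine ⟨⟨fun X ↦ ?_, fun X Y ↦ Rfam_union, fun X Y ↦ Rfam_inter hQdisj, ?_, Rfam_empty⟩,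
    ⟨fun j ↦ Rfam_singleton (hF j),
      fun j X ↦ Rfam_eq_empty_or_eq_of_subset_singleton hQdisj hQne,
      fun X ↦ exists_Rfam_singleton_subset⟩,
    ⟨fun j ↦ hQV _, fun X hX ↦ ?_⟩,
    ⟨fun X hX ↦ substW_eq_of_mapsTo (hdiag.mono_right (block_subset_Rfam hX)), hsubst_empty,
      fun j ↦ ?_, substW_eq_of_mapsTo hV, hV_ne.ne_empty⟩⟩
  · rw [← hQunion, iUnion_sdiff_Rfam hQdisj]
  · rw [Rfam_univ, hQunion]
  · rw [Rfam_eq_iUnion_of_forall_block_some_subset hQdisj hQne hX, hQunion]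
  · rw [← Rfam_singleton (Q := Q) (hF j), hsubst_empty _ (hF j)]

/-- The weak-space construction of an atomic set algebra (in the cylindrifier-free reduct
class `SA`) on which `s₀¹` is not completely additive, hence with no complete representation.
Here the index set `κ` is represented as `Option J` (`i* = none`, `J = κ ∖ {i*}`). -/
theorem weak_space_atomic_not_completely_additive
    (α : Ordinal.{0}) (hα : 2 ≤ α) (h0 : (0 : Ordinal.{0}) < α) (h1 : (1 : Ordinal.{0}) < α)
    (U : Type) [Infinite U] (p : {i : Ordinal.{0} // i < α} → U)
    (κ : Cardinal.{0}) (hκ : Cardinal.aleph0 ≤ κ)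
    (J : Type) (hJ : Cardinal.mk J = κ)
    (Q : Option J → Set ({i : Ordinal.{0} // i < α} → U))
    (hQne : ∀ k, (Q k).Nonempty)
    (hQdisj : ∀ k l : Option J, k ≠ l → Q k ∩ Q l = ∅)
    (hQunion : ⋃ k, Q k = weakSpace α U p)
    (hQid : Q none = {s ∈ weakSpace α U p | s ⟨0, h0⟩ = s ⟨1, h1⟩})
    (F : Ultrafilter J) (hF : ∀ j : J, {j} ∉ F) :
    -- (i) the `R_X` form a field of subsets of the weak space `V`
    ((∀ X : Set J, weakSpace α U p \ Rfam Q F X = Rfam Q F Xᶜ) ∧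
     (∀ X Y : Set J, Rfam Q F (X ∪ Y) = Rfam Q F X ∪ Rfam Q F Y) ∧
     (∀ X Y : Set J, Rfam Q F (X ∩ Y) = Rfam Q F X ∩ Rfam Q F Y) ∧
     Rfam Q F Set.univ = weakSpace α U p ∧ Rfam Q F ∅ = ∅) ∧
    -- (ii) the algebra is atomic with atoms exactly the `Q_k = R_{{k}}`, `k ∈ J`
    ((∀ k : J, Rfam Q F {k} = Q (some k)) ∧
     (∀ (k : J) (X : Set J), Rfam Q F X ⊆ Rfam Q F {k} →
        Rfam Q F X = ∅ ∨ Rfam Q F X = Rfam Q F {k}) ∧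
     (∀ X : Set J, (Rfam Q F X).Nonempty → ∃ k : J, Rfam Q F {k} ⊆ Rfam Q F X)) ∧
    -- (iii) the least upper bound of the atoms is `V`
    ((∀ k : J, Q (some k) ⊆ weakSpace α U p) ∧
     (∀ X : Set J, (∀ k : J, Q (some k) ⊆ Rfam Q F X) → Rfam Q F X = weakSpace α U p)) ∧
    -- (iv) `s₀¹` behaviour: closure, and complete additivity fails
    ((∀ X : Set J, X ∈ F →
        substW ⟨0, h0⟩ ⟨1, h1⟩ (weakSpace α U p) (Rfam Q F X) = weakSpace α U p) ∧
     (∀ X : Set J, X ∉ F → substW ⟨0, h0⟩ ⟨1, h1⟩ (weakSpace α U p) (Rfam Q F X) = ∅) ∧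
     (∀ k : J, substW ⟨0, h0⟩ ⟨1, h1⟩ (weakSpace α U p) (Q (some k)) = ∅) ∧
     substW ⟨0, h0⟩ ⟨1, h1⟩ (weakSpace α U p) (weakSpace α U p) = weakSpace α U p ∧
     weakSpace α U p ≠ ∅) := by
  exact weak_space_atomic_not_completely_additive_general (by simp)
    (fun s hs ↦ update_mem_weakSpace hs _ _) (fun j ↦ hQne (some j))
    (fun k l hkl ↦ disjoint_iff_inter_eq_empty.2 (hQdisj k l hkl)) hQunion hQid hF
end

section
/- Let κ be an infinite cardinal and let At = {1'} ∪ { a₀^i : i < 2^κ } ∪ { a_j : 1 ≤ j < κ } be a set of pairwise distinct 'atoms'. Call a function N : ω × ω → At a network if: N(x,x) = 1' for all x; N(x,y) = N(y,x) for all x,y; whenever N(x,y) = 1' one has N(x,z) = N(y,z) for all z; there is no triangle x,y,z and index j with 1 ≤ j < κ such that N(x,y) = N(y,z) = N(x,z) = a_j; and there is no triangle x,y,z with all three labels N(x,y), N(y,z), N(x,z) lying in { a₀^i : i < 2^κ }. Let S be the set of networks N such that { j : 1 ≤ j < κ and a_j occurs as a label of some edge of N } is finite. Then S is an amalgamation class: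 for all M, N ∈ S and all i, j < ω, if M(k,l) = N(k,l) for all k, l ∈ ω ∖ {i, j}, then there exists L ∈ S such that L(k,l) = M(k,l) whenever i ∉ {k,l} and L(k,l) = N(k,l) whenever j ∉ {k,l}. -/
/-- A network over the atom structure `At = {1'} ∪ {a₀^i : i ∈ A0} ∪ {a_j : j ∈ A1}`
(`1'` is `none`, `a₀^i` is `some (Sum.inl i)`, `a_j` is `some (Sum.inr j)`): labels are
reflexive-identity, symmetric, identity behaves as identity, and there are no monochromatic
triangles `(a_j, a_j, a_j)` and none with all three labels among the `a₀^i`. -/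
def IsNetwork {A0 A1 : Type*} (N : ℕ → ℕ → Option (A0 ⊕ A1)) : Prop :=
  (∀ x, N x x = none) ∧
  (∀ x y, N x y = N y x) ∧
  (∀ x y, N x y = none → ∀ z, N x z = N y z) ∧
  (¬ ∃ (x y z : ℕ) (j : A1), N x y = some (Sum.inr j) ∧ N y z = some (Sum.inr j) ∧
      N x z = some (Sum.inr j)) ∧
  (¬ ∃ x y z : ℕ, (∃ i : A0, N x y = some (Sum.inl i)) ∧ (∃ i : A0, N y z = some (Sum.inl i)) ∧
      (∃ i : A0, N x z = some (Sum.inl i)))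

/-- Membership in `S`: only finitely many of the atoms `a_j` (`j ∈ A1`) occur as labels. -/
def FinSupport {A0 A1 : Type*} (N : ℕ → ℕ → Option (A0 ⊕ A1)) : Prop :=
  {j : A1 | ∃ x y : ℕ, N x y = some (Sum.inr j)}.Finite

/-!
Only the label of the edge `ij` is not prescribed by `M` and `N`, and being a network is a
condition on triangles, so it is enough to choose that label so that each triangle `i, j, z` is
allowed. If `M` identifies `j` with a third node `k`, the label `N i k` works, because `M j z` is
then `N k z`; symmetrically if `N` identifies `i` with a third node. Otherwise no edge from `i` or
`j` to a third node is labelled `1'`, and an atom `a_m` that does not occur in `M` works; such an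
atom exists since only finitely many of the infinitely many `a_m` occur in `M`.
-/

section Triangles

variable {A0 A1 : Type*}

/-- The triple of atoms `(p, q, r)` is not forbidden in the atom structure, that is, it may label
the three sides of a triangle in a network. The first three fields exclude the permutations of
`(1', x, y)` with `x ≠ y`. -/
structure IsConsistent (p q r : Option (A0 ⊕ A1)) : Prop where
  eq_of_left_eq_none : p = none → q = r
  eq_of_middle_eq_none : q = none → p = r
  eq_of_right_eq_none : r = none → p = q
  not_all_inr : ¬ ∃ j : A1, p = some (.inr j) ∧ q = some (.inr j) ∧ r = some (.inr j)
  not_all_inl : ¬ ((∃ a : A0, p = some (.inl a)) ∧ (∃ a : A0, q = some (.inl a)) ∧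
    ∃ a : A0, r = some (.inl a))

namespace IsConsistent

variable {p q r : Option (A0 ⊕ A1)}

theorem swap (h : IsConsistent p q r) : IsConsistent p r q where
  eq_of_left_eq_none hp := (h.eq_of_left_eq_none hp).symm
  eq_of_middle_eq_none := h.eq_of_right_eq_none
  eq_of_right_eq_none := h.eq_of_middle_eq_none
  not_all_inr := fun ⟨j, hp, hr, hq⟩ => h.not_all_inr ⟨j, hp, hq, hr⟩
  not_all_inl := fun ⟨hp, hr, hq⟩ => h.not_all_inl ⟨hp, hq, hr⟩

theorem rotate (h : IsConsistent p q r) : IsConsistent q r p where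
  eq_of_left_eq_none hq := (h.eq_of_middle_eq_none hq).symm
  eq_of_middle_eq_none hr := (h.eq_of_right_eq_none hr).symm
  eq_of_right_eq_none := h.eq_of_left_eq_none
  not_all_inr := fun ⟨j, hq, hr, hp⟩ => h.not_all_inr ⟨j, hp, hq, hr⟩
  not_all_inl := fun ⟨hq, hr, hp⟩ => h.not_all_inl ⟨hp, hq, hr⟩

theorem none_self (p : Option (A0 ⊕ A1)) : IsConsistent none p p where
  eq_of_left_eq_none _ := rfl
  eq_of_middle_eq_none := Eq.symm
  eq_of_right_eq_none := Eq.symm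
  not_all_inr := fun ⟨_, h, _⟩ => nomatch h
  not_all_inl := fun ⟨⟨_, h⟩, _⟩ => nomatch h

theorem inr_of_ne {m : A1} (hq : q ≠ none) (hr : r ≠ none) (hqm : q ≠ some (.inr m)) :
    IsConsistent (some (.inr m)) q r where
  eq_of_left_eq_none h := nomatch h
  eq_of_middle_eq_none h := absurd h hq
  eq_of_right_eq_none h := absurd h hr
  not_all_inr := fun ⟨_, hm, hqj, _⟩ => hqm (hqj.trans hm.symm)
  not_all_inl := fun ⟨⟨_, hm⟩, _⟩ => nomatch hm

end IsConsistent

theorem isNetwork_iff_isConsistent {N : ℕ → ℕ → Option (A0 ⊕ A1)} :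
    IsNetwork N ↔ (∀ x, N x x = none) ∧ (∀ x y, N x y = N y x) ∧
      ∀ x y z, IsConsistent (N x y) (N y z) (N x z) := by
  constructor
  · rintro ⟨hrefl, hsymm, hid, hinr, hinl⟩
    refine ⟨hrefl, hsymm, fun x y z => ⟨fun h => (hid x y h z).symm, fun h => ?_, fun h => ?_,
      fun ⟨j, h⟩ => hinr ⟨x, y, z, j, h⟩, fun h => hinl ⟨x, y, z, h⟩⟩⟩
    · rw [hsymm x y, hsymm x z, hid y z h x]
    · rw [hsymm y z, hid x z h y]
  · rintro ⟨hrefl, hsymm, htri⟩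
    exact ⟨hrefl, hsymm, fun x y h z => ((htri x y z).eq_of_left_eq_none h).symm,
      fun ⟨x, y, z, j, h⟩ => (htri x y z).not_all_inr ⟨j, h⟩,
      fun ⟨x, y, z, h⟩ => (htri x y z).not_all_inl h⟩

theorem IsNetwork.self_eq_none {N : ℕ → ℕ → Option (A0 ⊕ A1)} (hN : IsNetwork N) (x : ℕ) :
    N x x = none :=
  hN.1 x

theorem IsNetwork.symm {N : ℕ → ℕ → Option (A0 ⊕ A1)} (hN : IsNetwork N) (x y : ℕ) :
    N x y = N y x :=
  hN.2.1 x y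

theorem IsNetwork.eq_of_eq_none {N : ℕ → ℕ → Option (A0 ⊕ A1)} (hN : IsNetwork N) {x y : ℕ}
    (h : N x y = none) (z : ℕ) : N x z = N y z :=
  hN.2.2.1 x y h z

theorem IsNetwork.isConsistent {N : ℕ → ℕ → Option (A0 ⊕ A1)} (hN : IsNetwork N) (x y z : ℕ) :
    IsConsistent (N x y) (N y z) (N x z) :=
  (isNetwork_iff_isConsistent.1 hN).2.2 x y z

theorem isNetwork_of_isConsistent_edge {L : ℕ → ℕ → Option (A0 ⊕ A1)} {i j : ℕ} (hij : i ≠ j)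
    (hrefl : ∀ x, L x x = none) (hsymm : ∀ x y, L x y = L y x)
    (hi : ∀ x y z, x ≠ i → y ≠ i → z ≠ i → IsConsistent (L x y) (L y z) (L x z))
    (hj : ∀ x y z, x ≠ j → y ≠ j → z ≠ j → IsConsistent (L x y) (L y z) (L x z))
    (hedge : ∀ z, z ≠ i → z ≠ j → IsConsistent (L i j) (L j z) (L i z)) :
    IsNetwork L := by
  have swap {x y z : ℕ} (h : IsConsistent (L x y) (L y z) (L x z)) :
      IsConsistent (L y x) (L x z) (L y z) := hsymm x y ▸ h.swap
  have rotate {x y z : ℕ} (h : IsConsistent (L x y) (L y z) (L x z)) :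
      IsConsistent (L y z) (L z x) (L y x) := hsymm x z ▸ hsymm x y ▸ h.rotate
  have edge (z : ℕ) : IsConsistent (L i j) (L j z) (L i z) := by
    rcases eq_or_ne z i with rfl | hzi
    · rw [hsymm j z, hrefl]
      exact (IsConsistent.none_self _).rotate
    rcases eq_or_ne z j with rfl | hzj
    · rw [hrefl]
      exact (IsConsistent.none_self _).rotate.rotate
    · exact hedge z hzi hzj
  refine isNetwork_iff_isConsistent.2 ⟨hrefl, hsymm, fun x y z => ?_⟩
  by_cases avoids_i : x ≠ i ∧ y ≠ i ∧ z ≠ i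
  · exact hi x y z avoids_i.1 avoids_i.2.1 avoids_i.2.2
  by_cases avoids_j : x ≠ j ∧ y ≠ j ∧ z ≠ j
  · exact hj x y z avoids_j.1 avoids_j.2.1 avoids_j.2.2
  have arrangements : (x = i ∧ y = j) ∨ (x = j ∧ y = i) ∨ (x = i ∧ z = j) ∨
      (x = j ∧ z = i) ∨ (y = i ∧ z = j) ∨ (y = j ∧ z = i) := by omega
  rcases arrangements with ⟨rfl, rfl⟩ | ⟨rfl, rfl⟩ | ⟨rfl, rfl⟩ | ⟨rfl, rfl⟩ | ⟨rfl, rfl⟩ |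
    ⟨rfl, rfl⟩
  · exact edge z
  · exact swap (edge z)
  · exact swap (rotate (rotate (edge y)))
  · exact rotate (edge y)
  · exact rotate (rotate (edge x))
  · exact rotate (rotate (swap (edge x)))

end Triangles

section Amalgam

/-- The amalgam of two labellings `M`, `N` of pairs of nodes which agree off `i` and `j`: it takes
the label `c` on the edge `ij`, follows `N` on the remaining edges at `i` and `M` off `i`. -/
def amalgam {V α : Type*} [DecidableEq V] (M N : V → V → α) (i j : V) (c : α) (x y : V) : α :=
  if s(x, y) = s(i, j) then c else if x = i ∨ y = i then N x y else M x y

section Labelling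

variable {V α : Type*} [DecidableEq V] {M N : V → V → α} {i j : V} {c : α}

theorem amalgam_edge : amalgam M N i j c i j = c :=
  if_pos rfl

theorem amalgam_of_ne_left {x y : V} (hx : x ≠ i) (hy : y ≠ i) :
    amalgam M N i j c x y = M x y := by
  simp [amalgam, hx, hy]

theorem amalgam_of_ne_right
    (hMN : ∀ k l : V, k ≠ i → k ≠ j → l ≠ i → l ≠ j → M k l = N k l)
    {x y : V} (hx : x ≠ j) (hy : y ≠ j) : amalgam M N i j c x y = N x y := by
  by_cases h : x = i ∨ y = i
  · simp [amalgam, hx, hy, h]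
  · rw [not_or] at h
    rw [amalgam_of_ne_left h.1 h.2, hMN x y h.1 hx h.2 hy]

theorem amalgam_self (hij : i ≠ j) {a : α} (hM : ∀ x, M x x = a) (hN : ∀ x, N x x = a) (x : V) :
    amalgam M N i j c x x = a := by
  have : s(x, x) ≠ s(i, j) := by
    rw [Ne, Sym2.eq_iff]
    rintro (⟨rfl, rfl⟩ | ⟨rfl, rfl⟩) <;> exact hij rfl
  simp [amalgam, this, hM, hN]

theorem amalgam_symm (hM : ∀ x y, M x y = M y x) (hN : ∀ x y, N x y = N y x) (x y : V) :
    amalgam M N i j c x y = amalgam M N i j c y x := by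
  simp only [amalgam, Sym2.eq_swap (a := x), or_comm (a := x = i), hM x y, hN x y]

end Labelling

variable {A0 A1 : Type*} {M N : ℕ → ℕ → Option (A0 ⊕ A1)} {i j : ℕ} {c : Option (A0 ⊕ A1)}

theorem IsNetwork.amalgam (hM : IsNetwork M) (hN : IsNetwork N) (hij : i ≠ j)
    (hMN : ∀ k l : ℕ, k ≠ i → k ≠ j → l ≠ i → l ≠ j → M k l = N k l)
    (hc : ∀ z, z ≠ i → z ≠ j → IsConsistent c (M j z) (N i z)) :
    IsNetwork (amalgam M N i j c) := by
  refine isNetwork_of_isConsistent_edge hij (amalgam_self hij hM.self_eq_none hN.self_eq_none)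
    (amalgam_symm hM.symm hN.symm) (fun x y z hx hy hz => ?_) (fun x y z hx hy hz => ?_)
    fun z hzi hzj => ?_
  · simpa only [amalgam_of_ne_left hx hy, amalgam_of_ne_left hy hz, amalgam_of_ne_left hx hz]
      using hM.isConsistent x y z
  · simpa only [amalgam_of_ne_right hMN hx hy, amalgam_of_ne_right hMN hy hz,
      amalgam_of_ne_right hMN hx hz] using hN.isConsistent x y z
  · rw [amalgam_edge, amalgam_of_ne_left hij.symm hzi, amalgam_of_ne_right hMN hij hzj]
    exact hc z hzi hzj

theorem FinSupport.amalgam (hM : FinSupport M) (hN : FinSupport N) :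
    FinSupport (amalgam M N i j c) := by
  have hc : {m : A1 | c = some (.inr m)}.Finite :=
    Set.Subsingleton.finite fun m hm n hn => by simpa using hm.symm.trans hn
  refine ((hM.union hN).union hc).subset ?_
  rintro m ⟨x, y, h⟩
  unfold _root_.amalgam at h
  split_ifs at h
  · exact .inr h
  · exact .inl (.inr ⟨x, y, h⟩)
  · exact .inl (.inl ⟨x, y, h⟩)

theorem FinSupport.exists_forall_ne [Infinite A1] (hM : FinSupport M) :
    ∃ m : A1, ∀ x y, M x y ≠ some (.inr m) := by
  obtain ⟨m, hm⟩ := Set.Finite.exists_notMem hM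
  exact ⟨m, fun x y h => hm ⟨x, y, h⟩⟩

theorem IsNetwork.isConsistent_of_eq_none (hM : IsNetwork M) (hN : IsNetwork N)
    (hMN : ∀ k l : ℕ, k ≠ i → k ≠ j → l ≠ i → l ≠ j → M k l = N k l) {k z : ℕ}
    (hki : k ≠ i) (hkj : k ≠ j) (hk : M j k = none) (hzi : z ≠ i) (hzj : z ≠ j) :
    IsConsistent (N i k) (M j z) (N i z) := by
  rw [hM.eq_of_eq_none hk z, hMN k z hki hkj hzi hzj]
  exact hN.isConsistent i k z

theorem exists_isConsistent_label [Infinite A1] (hM : IsNetwork M) (hN : IsNetwork N)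
    (hMfin : FinSupport M)
    (hMN : ∀ k l : ℕ, k ≠ i → k ≠ j → l ≠ i → l ≠ j → M k l = N k l) :
    ∃ c, ∀ z, z ≠ i → z ≠ j → IsConsistent c (M j z) (N i z) := by
  by_cases hMj : ∃ k, k ≠ i ∧ k ≠ j ∧ M j k = none
  · obtain ⟨k, hki, hkj, hk⟩ := hMj
    exact ⟨N i k, fun z => hM.isConsistent_of_eq_none hN hMN hki hkj hk⟩
  by_cases hNi : ∃ k, k ≠ i ∧ k ≠ j ∧ N i k = none
  · obtain ⟨k, hki, hkj, hk⟩ := hNi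
    have hNM (k l : ℕ) (hkj : k ≠ j) (hki : k ≠ i) (hlj : l ≠ j) (hli : l ≠ i) : N k l = M k l :=
      (hMN k l hki hkj hli hlj).symm
    exact ⟨M j k, fun z hzi hzj =>
      (hN.isConsistent_of_eq_none hM hNM hkj hki hk hzj hzi).swap⟩
  · obtain ⟨m, hm⟩ := hMfin.exists_forall_ne
    exact ⟨some (.inr m), fun z hzi hzj => .inr_of_ne (fun h => hMj ⟨z, hzi, hzj, h⟩)
      (fun h => hNi ⟨z, hzi, hzj, h⟩) (hm j z)⟩

end Amalgam

theorem networks_amalgamation_general {A0 A1 : Type*} [Infinite A1]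
    (M N : ℕ → ℕ → Option (A0 ⊕ A1))
    (hM : IsNetwork M ∧ FinSupport M) (hN : IsNetwork N ∧ FinSupport N)
    (i j : ℕ)
    (hMN : ∀ k l : ℕ, k ≠ i → k ≠ j → l ≠ i → l ≠ j → M k l = N k l) :
    ∃ L : ℕ → ℕ → Option (A0 ⊕ A1), (IsNetwork L ∧ FinSupport L) ∧
      (∀ k l : ℕ, k ≠ i → l ≠ i → L k l = M k l) ∧
      (∀ k l : ℕ, k ≠ j → l ≠ j → L k l = N k l) := by
  rcases eq_or_ne i j with rfl | hij
  · exact ⟨M, hM, fun _ _ _ _ => rfl, fun k l hk hl => hMN k l hk hk hl hl⟩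
  obtain ⟨c, hc⟩ := exists_isConsistent_label hM.1 hN.1 hM.2 hMN
  exact ⟨amalgam M N i j c, ⟨hM.1.amalgam hN.1 hij hMN hc, hM.2.amalgam hN.2⟩,
    fun _ _ => amalgam_of_ne_left, fun _ _ => amalgam_of_ne_right hMN⟩

/-- **`S` is an amalgamation class.** With `κ` an infinite cardinal, `#A0 = 2^κ` indexing the
atoms `a₀^i` and `#A1 = κ` indexing the atoms `a_j`, if `M, N ∈ S` agree on all edges avoiding
the nodes `i` and `j` (`M ≡_{ij} N`), then there is `L ∈ S` with `M ≡_i L` and `L ≡_j N`. -/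
theorem networks_amalgamation (κ : Cardinal.{u}) (hκ : Cardinal.aleph0 ≤ κ)
    (A0 A1 : Type u) (h0 : Cardinal.mk A0 = 2 ^ κ) (h1 : Cardinal.mk A1 = κ)
    (M N : ℕ → ℕ → Option (A0 ⊕ A1))
    (hM : IsNetwork M ∧ FinSupport M) (hN : IsNetwork N ∧ FinSupport N)
    (i j : ℕ)
    (hMN : ∀ k l : ℕ, k ≠ i → k ≠ j → l ≠ i → l ≠ j → M k l = N k l) :
    ∃ L : ℕ → ℕ → Option (A0 ⊕ A1), (IsNetwork L ∧ FinSupport L) ∧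
      (∀ k l : ℕ, k ≠ i → l ≠ i → L k l = M k l) ∧
      (∀ k l : ℕ, k ≠ j → l ≠ j → L k l = N k l) := by
  have : Infinite A1 := Cardinal.infinite_iff.2 (hκ.trans_eq h1.symm)
  exact networks_amalgamation_general M N hM hN i j hMN
end

section
/- For every consistent countable first-order theory T (in a countable language, having an infinite model) there exists a family (M_i : i < 2^{ℵ₀}) of countable models of T that overlap only on principal types: whenever i ≠ j, every complete type of a finite tuple that is realized both in M_i and in M_j is principal, i.e. isolated by a single formula ψ(x̄) consistent with T such that T ⊨ ∀x̄ (ψ → φ) for every formula φ in the type. -/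
open FirstOrder FirstOrder.Language Cardinal

/-- The complete type of the tuple `a` in the structure `M`: the set of all formulas in the
appropriate number of free variables that `a` satisfies in `M`. -/
def tpSet (L : FirstOrder.Language) (M : Type*) [L.Structure M] {m : ℕ} (a : Fin m → M) :
    Set (L.Formula (Fin m)) :=
  {φ | φ.Realize a}

/-!
Fix countably many variables. The formulas in these variables that are consistent with `T`, ordered
by implication modulo `T`, form a forcing notion. A chain of conditions that meets, for every
formula `χ(x)`, the cofinal set of conditions implying some instance of `∃ x, χ(x) → χ(xₖ)` is
realized by an enumeration of a countable model.

Given two conditions and tuples of variables `a` and `b`, either both conditions can be strengthened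
so as to force the types of `a` and `b` to differ, or the first condition already decides every
formula about `a`. In the latter case the existential projection of this condition to `a` isolates
the type of `a`. A perfect tree of conditions any two distinct branches of which meet all these
cofinal sets thus yields `2 ^ ℵ₀` models.
-/

universe u v w w'

section PerfectTree

variable {P ι I : Type*} [Preorder P]

theorem isCofinal_inter_of_isUpperSet {s t : Set P} (hs : IsCofinal s) (hs' : IsUpperSet s)
    (ht : IsCofinal t) : IsCofinal (s ∩ t) := by
  intro p
  obtain ⟨q, hqs, hpq⟩ := hs p
  obtain ⟨r, hrt, hqr⟩ := ht q
  exact ⟨r, ⟨hs' hqr hqs, hrt⟩, hpq.trans hqr⟩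

theorem isCofinal_biInter_of_isUpperSet {J : Set ι} (hJ : J.Finite) {D : ι → Set P}
    (hD : ∀ i, IsCofinal (D i)) (hD' : ∀ i, IsUpperSet (D i)) : IsCofinal (⋂ i ∈ J, D i) := by
  induction J, hJ using Set.Finite.induction_on with
  | empty => simp
  | insert _ _ ih =>
    rw [Set.biInter_insert]
    exact isCofinal_inter_of_isUpperSet (hD _) (hD' _) ih

theorem isCofinal_setOf_pair_mem {E : Set (P × P)} (hE : IsCofinal E) {i j : I} (hij : i ≠ j) :
    IsCofinal {g : I → P | (g i, g j) ∈ E} := by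
  classical
  intro g
  obtain ⟨⟨p, q⟩, hpq, hip, hjq⟩ := hE (g i, g j)
  refine ⟨Function.update (Function.update g i p) j q, ?_, ?_⟩
  · simpa [Function.update_of_ne hij] using hpq
  · have hle : g ≤ Function.update g i p := le_update_iff.2 ⟨hip, fun _ _ ↦ le_rfl⟩
    exact le_update_iff.2 ⟨hjq, fun l _ ↦ hle l⟩

theorem isCofinal_setOf_pairwise_mem [Finite I] {E : Set (P × P)} (hE : IsCofinal E)
    (hE' : IsUpperSet E) : IsCofinal {g : I → P | Pairwise fun i j ↦ (g i, g j) ∈ E} := by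
  have hcof := isCofinal_biInter_of_isUpperSet (Set.finite_univ (α := {ij : I × I // ij.1 ≠ ij.2}))
    (fun ij ↦ isCofinal_setOf_pair_mem hE ij.2)
    (fun ij g h hgh ↦ hE' (Prod.mk_le_mk.2 ⟨hgh ij.1.1, hgh ij.1.2⟩))
  refine hcof.mono fun g hg i j hij ↦ ?_
  exact Set.mem_iInter₂.1 hg ⟨(i, j), hij⟩ (Set.mem_univ _)

theorem exists_branches_of_forall_isCofinal [Nonempty P] {E : ℕ → Set (P × P)}
    (hE : ∀ n, IsCofinal (E n)) (hE' : ∀ n, IsUpperSet (E n)) :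
    ∃ f : (ℕ → Bool) → ℕ → P, (∀ x, Monotone (f x)) ∧
      ∀ x y n, (∃ m < n, x m ≠ y m) → (f x n, f y n) ∈ E n := by
  choose extend hextend le_extend using fun n ↦
    isCofinal_setOf_pairwise_mem (I := Fin n → Bool) (hE n) (hE' n)
  let tree : ∀ n, (Fin n → Bool) → P := fun n ↦
    Nat.rec (fun _ ↦ Classical.arbitrary P) (fun n g ↦ extend (n + 1) fun s ↦ g (Fin.init s)) n
  refine ⟨fun x n ↦ tree n fun i ↦ x i, fun x ↦ monotone_nat_of_le_succ fun n ↦ ?_, ?_⟩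
  · exact le_extend (n + 1) (fun s ↦ tree n (Fin.init s)) fun i ↦ x i
  · rintro x y (_ | n) ⟨m, hm, hxy⟩
    · exact absurd hm m.not_lt_zero
    · exact hextend _ _ fun h ↦ hxy (congrFun h ⟨m, hm⟩)

theorem exists_pairwise_generic_branches [Nonempty P] [Countable ι] {E : ι → Set (P × P)}
    (hE : ∀ i, IsCofinal (E i)) (hE' : ∀ i, IsUpperSet (E i)) :
    ∃ f : (ℕ → Bool) → ℕ → P, (∀ x, Monotone (f x)) ∧
      ∀ x y, x ≠ y → ∀ i, ∃ n, (f x n, f y n) ∈ E i := by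
  have := Encodable.ofCountable ι
  obtain ⟨f, hf, hfE⟩ := exists_branches_of_forall_isCofinal
    (E := fun n ↦ ⋂ i ∈ Encodable.encode ⁻¹' Set.Iic n, E i)
    (fun n ↦ isCofinal_biInter_of_isUpperSet
      ((Set.finite_Iic n).preimage Encodable.encode_injective.injOn) hE hE')
    (fun n ↦ isUpperSet_iInter₂ fun i _ ↦ hE' i)
  refine ⟨f, hf, fun x y hxy i ↦ ?_⟩
  obtain ⟨m, hm⟩ := Function.ne_iff.1 hxy
  refine ⟨max (Encodable.encode i) (m + 1), ?_⟩
  exact Set.mem_iInter₂.1 (hfE x y _ ⟨m, by omega, hm⟩) i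
    (Set.mem_preimage.2 (Set.mem_Iic.2 (le_max_left _ _)))

end PerfectTree

section Formulas

variable {L : FirstOrder.Language.{u, v}} {T : L.Theory} {α : Type w} {β : Type w'}

theorem realize_congr_of_eqOn_freeVarFinset [DecidableEq α] {M : Type*} [L.Structure M]
    {φ : L.Formula α} {x y : α → M} (h : ∀ a ∈ φ.freeVarFinset, x a = y a) :
    φ.Realize x ↔ φ.Realize y :=
  (BoundedFormula.realize_restrictFreeVar (f := id) (v := fun a ↦ x a) x fun _ ↦ rfl).symm.trans
    (BoundedFormula.realize_restrictFreeVar y fun a ↦ h a a.2)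

theorem realize_of_imp {φ ψ : L.Formula α} (h : φ ⟹[T] ψ) {M : Type*} [L.Structure M] [M ⊨ T]
    [Nonempty M] {x : α → M} (hx : φ.Realize x) : ψ.Realize x :=
  Theory.ModelsBoundedFormula.realize_formula (φ := φ.imp ψ) h M hx

theorem imp_iff_forall_realize {φ ψ : L.Formula α} :
    (φ ⟹[T] ψ) ↔ ∀ (N : Theory.ModelType.{u, v, max u v w} T) (x : α → N),
      φ.Realize x → ψ.Realize x :=
  Theory.models_formula_iff

variable (T) in
/-- The formula `φ` is consistent with the theory `T`: some tuple in a model of `T` satisfies it. -/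
def IsConsistentWith (φ : L.Formula α) : Prop :=
  ∃ (N : Theory.ModelType.{u, v, max u v w} T) (x : α → N), φ.Realize x

variable (T) in
/-- A set of formulas is principal over `T` if a single formula consistent with `T` implies all of
its members modulo `T`. -/
def IsPrincipalOver (Γ : Set (L.Formula α)) : Prop :=
  ∃ ψ : L.Formula α, IsConsistentWith T ψ ∧ ∀ φ ∈ Γ, ψ ⟹[T] φ

theorem exists_realize_of_directed {ι : Type*} [Nonempty ι] {φ : ι → L.Formula α}
    (hdir : Directed (fun ψ χ ↦ χ ⟹[T] ψ) φ) (hφ : ∀ i, IsConsistentWith T (φ i)) :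
    ∃ (N : Theory.ModelType.{u, v, max u v w} T) (x : α → N), ∀ i, (φ i).Realize x := by
  let types : ι → Set (T.CompleteType α) := fun i ↦ T.typesWith (Formula.equivSentence (φ i))
  have hclosed (i : ι) : IsClosed (types i) := CompleteType.isClosed_typesWith _
  have hnonempty (i : ι) : (types i).Nonempty := by
    obtain ⟨N, x, hx⟩ := hφ i
    exact ⟨T.typeOf x, Theory.CompleteType.formula_mem_typeOf.2 hx⟩
  have hsubset {i j : ι} (hij : φ j ⟹[T] φ i) : types j ⊆ types i := by
    intro p hp
    obtain ⟨N, x, rfl⟩ := Theory.exists_modelType_is_realized_in T p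
    rw [Theory.CompleteType.mem_typesWith_iff, Theory.CompleteType.formula_mem_typeOf] at hp ⊢
    exact realize_of_imp hij hp
  obtain ⟨p, hp⟩ := IsCompact.nonempty_iInter_of_directed_nonempty_isCompact_isClosed types
    (fun i j ↦ (hdir i j).imp fun _ h ↦ ⟨hsubset h.1, hsubset h.2⟩) hnonempty
    (fun i ↦ (hclosed i).isCompact) hclosed
  obtain ⟨N, x, rfl⟩ := Theory.exists_modelType_is_realized_in T p
  exact ⟨N, x, fun i ↦ Theory.CompleteType.formula_mem_typeOf.1 (Set.mem_iInter.1 hp i)⟩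

theorem exists_formula_realize_iff_exists_comp_eq_of_finite [Finite α] [Finite β]
    (φ : L.Formula β) (a : α → β) :
    ∃ ψ : L.Formula α, ∀ (N : Type*) [L.Structure N] (c : α → N),
      ψ.Realize c ↔ ∃ x : β → N, φ.Realize x ∧ x ∘ a = c := by
  refine ⟨Formula.iExs β (φ.relabel Sum.inr ⊓ Formula.iInf fun i ↦
    Term.equal (Term.var (Sum.inr (a i))) (Term.var (Sum.inl i))), fun N _ c ↦ ?_⟩
  simp [Formula.realize_iExs, Formula.realize_equal, Formula.realize_relabel, funext_iff]

theorem exists_formula_realize_iff_exists_comp_eq [Finite α] (φ : L.Formula β) (a : α → β) :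
    ∃ ψ : L.Formula α, ∀ (N : Type*) [L.Structure N] [Nonempty N] (c : α → N),
      ψ.Realize c ↔ ∃ x : β → N, φ.Realize x ∧ x ∘ a = c := by
  classical
  let F : Set β := ↑φ.freeVarFinset ∪ Set.range a
  have : Finite F := (φ.freeVarFinset.finite_toSet.union (Set.finite_range a)).to_subtype
  have hF : ↑φ.freeVarFinset ⊆ F := Set.subset_union_left
  let b : α → F := fun i ↦ ⟨a i, Set.mem_union_right _ (Set.mem_range_self i)⟩
  obtain ⟨ψ, hψ⟩ := exists_formula_realize_iff_exists_comp_eq_of_finite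
    (φ.restrictFreeVar (Set.inclusion hF)) b
  refine ⟨ψ, fun N _ _ c ↦ ?_⟩
  have hrestrict : Function.Surjective fun x : β → N ↦ x ∘ ((↑) : F → β) :=
    Subtype.val_injective.surjective_comp_right
  rw [hψ, hrestrict.exists]
  exact exists_congr fun x ↦ and_congr_left' (BoundedFormula.realize_restrictFreeVar' hF)

/-- The Henkin axiom `∃ x, χ(x) → χ(k)`; the bound variable of `χ` is indexed by `Fin 1`. -/
noncomputable def henkinAxiom (χ : L.Formula (α ⊕ Fin 1)) (k : α) : L.Formula α :=
  (χ.iExs (Fin 1)).imp (χ.relabel (Sum.elim id fun _ ↦ k))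

theorem realize_henkinAxiom {χ : L.Formula (α ⊕ Fin 1)} {k : α} {M : Type*} [L.Structure M]
    {x : α → M} : (henkinAxiom χ k).Realize x ↔
      ((∃ d, χ.Realize (Sum.elim x d)) → χ.Realize (Sum.elim x fun _ ↦ x k)) := by
  rw [henkinAxiom, Formula.realize_imp, Formula.realize_iExs, Formula.realize_relabel,
    Sum.comp_elim]
  rfl

theorem meetsDefinable_range {M : Type*} [L.Structure M] {x : α → M}
    (hx : ∀ χ : L.Formula (α ⊕ Fin 1), ∃ k, (henkinAxiom χ k).Realize x) :
    L.MeetsDefinable (Set.range x) := by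
  rintro D ⟨d, hd⟩ hD
  obtain ⟨φ, hφ⟩ := Set.definable_iff_exists_formula_sum.1 hD
  let χ : L.Formula (α ⊕ Fin 1) := φ.relabel (Sum.map (Set.rangeSplitting x) id)
  have hχ (e : Fin 1 → M) : χ.Realize (Sum.elim x e) ↔ e 0 ∈ D := by
    have hnames : x ∘ Set.rangeSplitting x = (↑) := funext (Set.apply_rangeSplitting x)
    rw [Formula.realize_relabel, Sum.elim_comp_map, hnames, Function.comp_id]
    exact (Set.ext_iff.1 hφ e).symm
  obtain ⟨k, hk⟩ := hx χ
  exact ⟨x k, (hχ _).1 (realize_henkinAxiom.1 hk ⟨fun _ ↦ d, (hχ _).2 hd⟩), Set.mem_range_self k⟩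

end Formulas

section Forcing

variable {L : FirstOrder.Language.{u, v}} {T : L.Theory} {α : Type w}

variable (T) in
/-- A forcing condition over `T`: a formula in the variables `ℕ` consistent with `T`. Generic
sequences of conditions describe an enumeration of a countable model. -/
def ForcingCondition : Type (max u v) :=
  {φ : L.Formula ℕ // IsConsistentWith T φ}

namespace ForcingCondition

/-- Stronger conditions are larger. -/
instance : Preorder (ForcingCondition T) where
  le p q := q.1 ⟹[T] p.1
  le_refl p := Theory.Imp.refl p.1
  le_trans _ _ _ hpq hqr := Theory.Imp.trans hqr hpq

theorem exists_ge_imp {p : ForcingCondition T} {θ : L.Formula ℕ}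
    {N : Theory.ModelType.{u, v, max u v} T} {x : ℕ → N} (hp : p.1.Realize x)
    (hθ : θ.Realize x) : ∃ q ≥ p, q.1 ⟹[T] θ :=
  ⟨⟨p.1 ⊓ θ, N, x, Formula.realize_inf.2 ⟨hp, hθ⟩⟩, Theory.inf_imp_left _ _,
    Theory.inf_imp_right _ _⟩

variable (T) in
/-- The conditions that name a witness of `∃ x, χ(x)`, provided there is one. -/
def henkinSet (χ : L.Formula (ℕ ⊕ Fin 1)) : Set (ForcingCondition T) :=
  {p | ∃ k, p.1 ⟹[T] henkinAxiom χ k}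

theorem isUpperSet_henkinSet (χ : L.Formula (ℕ ⊕ Fin 1)) : IsUpperSet (henkinSet T χ) :=
  fun _ _ hpq hp ↦ hp.imp fun _ hk ↦ Theory.Imp.trans hpq hk

theorem isCofinal_henkinSet (χ : L.Formula (ℕ ⊕ Fin 1)) : IsCofinal (henkinSet T χ) := by
  intro p
  obtain ⟨k, hk⟩ := Infinite.exists_notMem_finset (p.1.freeVarFinset ∪ χ.freeVarFinset.toLeft)
  rw [Finset.mem_union, not_or, Finset.mem_toLeft] at hk
  obtain ⟨N, x, hx⟩ := p.2
  obtain ⟨d, hd⟩ : ∃ d : N, (∃ e, χ.Realize (Sum.elim x e)) → χ.Realize (Sum.elim x fun _ ↦ d) := by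
    by_cases h : ∃ e, χ.Realize (Sum.elim x e)
    · obtain ⟨e, he⟩ := h
      exact ⟨e default, fun _ ↦ eq_const_of_unique e ▸ he⟩
    · exact ⟨x 0, fun h' ↦ absurd h' h⟩
  have hp : p.1.Realize (Function.update x k d) := by
    refine (realize_congr_of_eqOn_freeVarFinset fun i hi ↦ ?_).2 hx
    exact Function.update_of_ne (ne_of_mem_of_not_mem hi hk.1) _ _
  have hχ (e : Fin 1 → N) :
      χ.Realize (Sum.elim (Function.update x k d) e) ↔ χ.Realize (Sum.elim x e) := by
    refine realize_congr_of_eqOn_freeVarFinset ?_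
    rintro (i | i) hi
    · exact Function.update_of_ne (fun h : i = k ↦ hk.2 (h ▸ hi)) _ _
    · rfl
  have hhenkin : (henkinAxiom χ k).Realize (Function.update x k d) := by
    simpa only [realize_henkinAxiom, hχ, Function.update_self] using hd
  obtain ⟨q, hpq, hq⟩ := exists_ge_imp hp hhenkin
  exact ⟨q, ⟨k, hq⟩, hpq⟩

theorem exists_surjective_realize {f : ℕ → ForcingCondition T} (hf : Monotone f)
    (hhenkin : ∀ χ, ∃ n, f n ∈ henkinSet T χ) :
    ∃ (M : Theory.ModelType.{u, v, max u v} T) (x : ℕ → M), Function.Surjective x ∧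
      ∀ n, (f n).1.Realize x := by
  obtain ⟨N, x, hx⟩ := exists_realize_of_directed hf.directed_le fun n ↦ (f n).2
  have hmeets : L.MeetsDefinable (Set.range x) := meetsDefinable_range fun χ ↦ by
    obtain ⟨n, k, hk⟩ := hhenkin χ
    exact ⟨k, realize_of_imp hk (hx n)⟩
  let S : L.ElementarySubstructure N := hmeets.toElementarySubstructure
  have hS : (S : Set N) = Set.range x := hmeets.closure_eq_self
  let y : ℕ → S := fun n ↦ ⟨x n, hS.ge (Set.mem_range_self n)⟩
  have : Nonempty S := ⟨y 0⟩
  refine ⟨Theory.ModelType.of T S, y, ?_, fun n ↦ (S.subtype.map_formula (f n).1 y).1 (hx n)⟩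
  rintro ⟨d, hd⟩
  obtain ⟨n, rfl⟩ := hS.le hd
  exact ⟨n, rfl⟩

/-- The conditions `p` and `q` separate the tuples of variables `a` and `b`: they force some formula
to hold of `a` in a model described by `p` and to fail of `b` in a model described by `q`. -/
def Separates (p q : ForcingCondition T) (a b : α → ℕ) : Prop :=
  ∃ θ : L.Formula α, (p.1 ⟹[T] θ.relabel a) ∧ (q.1 ⟹[T] ∼(θ.relabel b))

/-- The condition `p` determines the complete type of the tuple of variables `a`. -/
def Decides (p : ForcingCondition T) (a : α → ℕ) : Prop :=
  ∀ θ : L.Formula α, (p.1 ⟹[T] θ.relabel a) ∨ (p.1 ⟹[T] ∼(θ.relabel a))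

variable (T) in
/-- The pairs of conditions that separate `a` from `b`, or whose first component decides `a`. -/
def separationSet (a b : α → ℕ) : Set (ForcingCondition T × ForcingCondition T) :=
  {pq | pq.1.Separates pq.2 a b ∨ pq.1.Decides a}

theorem isUpperSet_separationSet (a b : α → ℕ) : IsUpperSet (separationSet T a b) := by
  rintro ⟨p, q⟩ ⟨p', q'⟩ ⟨hp, hq⟩ (⟨θ, hθp, hθq⟩ | hdecides)
  · exact Or.inl ⟨θ, Theory.Imp.trans hp hθp, Theory.Imp.trans hq hθq⟩
  · exact Or.inr fun θ ↦ (hdecides θ).imp (Theory.Imp.trans hp) (Theory.Imp.trans hp)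

theorem exists_ge_separates_of_not_decides {p : ForcingCondition T} {a : α → ℕ}
    (hp : ¬ p.Decides a) (q : ForcingCondition T) (b : α → ℕ) :
    ∃ p' ≥ p, ∃ q' ≥ q, p'.Separates q' a b := by
  simp only [Decides, imp_iff_forall_realize, Formula.realize_not, not_forall, not_or,
    not_not] at hp
  obtain ⟨θ, ⟨N₀, x₀, hx₀, hθ₀⟩, ⟨N₁, x₁, hx₁, hθ₁⟩⟩ := hp
  obtain ⟨K, y, hy⟩ := q.2
  by_cases hθ : (θ.relabel b).Realize y
  · obtain ⟨p', hpp', hp'⟩ := exists_ge_imp (θ := Formula.relabel a ∼θ) hx₀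
      (by simpa [Formula.realize_relabel] using hθ₀)
    obtain ⟨q', hqq', hq'⟩ := exists_ge_imp (θ := ∼(Formula.relabel b ∼θ)) hy
      (by simpa [Formula.realize_relabel] using hθ)
    exact ⟨p', hpp', q', hqq', ∼θ, hp', hq'⟩
  · obtain ⟨p', hpp', hp'⟩ := exists_ge_imp hx₁ hθ₁
    obtain ⟨q', hqq', hq'⟩ := exists_ge_imp hy (Formula.realize_not.2 hθ)
    exact ⟨p', hpp', q', hqq', θ, hp', hq'⟩

theorem isCofinal_separationSet (a b : α → ℕ) : IsCofinal (separationSet T a b) := by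
  rintro ⟨p, q⟩
  by_cases hp : p.Decides a
  · exact ⟨(p, q), Or.inr hp, le_rfl⟩
  · obtain ⟨p', hpp', q', hqq', hsep⟩ := exists_ge_separates_of_not_decides hp q b
    exact ⟨(p', q'), Or.inl hsep, hpp', hqq'⟩

section Realize

variable {M N : Type*} [L.Structure M] [M ⊨ T] [Nonempty M] [L.Structure N] [N ⊨ T] [Nonempty N]
  {p q : ForcingCondition T} {x : ℕ → M} {y : ℕ → N} {m : ℕ} {a b : Fin m → ℕ}

theorem Separates.tpSet_ne (h : p.Separates q a b) (hx : p.1.Realize x) (hy : q.1.Realize y) :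
    tpSet L M (x ∘ a) ≠ tpSet L N (y ∘ b) := by
  obtain ⟨θ, hp, hq⟩ := h
  have hθx : θ ∈ tpSet L M (x ∘ a) := Formula.realize_relabel.1 (realize_of_imp hp hx)
  have hθy : θ ∉ tpSet L N (y ∘ b) := fun hθ ↦
    Formula.realize_not.1 (realize_of_imp hq hy) (Formula.realize_relabel.2 hθ)
  exact fun heq ↦ hθy (heq ▸ hθx)

theorem Decides.isPrincipalOver_tpSet (h : p.Decides a) (hx : p.1.Realize x) :
    IsPrincipalOver T (tpSet L M (x ∘ a)) := by
  obtain ⟨ψ, hψ⟩ := exists_formula_realize_iff_exists_comp_eq p.1 a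
  obtain ⟨N, z, hz⟩ := p.2
  refine ⟨ψ, ⟨N, z ∘ a, (hψ N _).2 ⟨z, hz, rfl⟩⟩, fun φ hφ ↦ ?_⟩
  refine imp_iff_forall_realize.2 fun K c hc ↦ ?_
  obtain ⟨y, hy, rfl⟩ := (hψ K c).1 hc
  rcases h φ with hforce | hforce
  · exact Formula.realize_relabel.1 (realize_of_imp hforce hy)
  · exact absurd (Formula.realize_relabel.2 hφ) (Formula.realize_not.1 (realize_of_imp hforce hx))

end Realize

theorem exists_pairwise_generic_conditions [Countable L.Symbols] (hT : T.IsSatisfiable) :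
    ∃ f : (ℕ → Bool) → ℕ → ForcingCondition T, (∀ i, Monotone (f i)) ∧
      (∀ i χ, ∃ n, f i n ∈ henkinSet T χ) ∧
      ∀ i j, i ≠ j → ∀ (m : ℕ) (a b : Fin m → ℕ), ∃ n, (f i n, f j n) ∈ separationSet T a b := by
  have : Nonempty (ForcingCondition T) := by
    obtain ⟨N⟩ := hT
    exact ⟨⟨⊤, N, fun _ ↦ Classical.arbitrary N, Formula.realize_top.2 trivial⟩⟩
  let E : L.Formula (ℕ ⊕ Fin 1) ⊕ (Σ m, (Fin m → ℕ) × (Fin m → ℕ)) →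
      Set (ForcingCondition T × ForcingCondition T) :=
    Sum.elim (fun χ ↦ Prod.fst ⁻¹' henkinSet T χ) fun t ↦ separationSet T t.2.1 t.2.2
  have hE : ∀ r, IsCofinal (E r) := by
    rintro (χ | t)
    · rintro ⟨p, q⟩
      obtain ⟨p', hp', hpp'⟩ := isCofinal_henkinSet χ p
      exact ⟨(p', q), hp', hpp', le_rfl⟩
    · exact isCofinal_separationSet t.2.1 t.2.2
  have hE' : ∀ r, IsUpperSet (E r) := by
    rintro (χ | t)
    · exact (isUpperSet_henkinSet χ).preimage monotone_fst
    · exact isUpperSet_separationSet t.2.1 t.2.2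
  obtain ⟨f, hf, hgeneric⟩ := exists_pairwise_generic_branches hE hE'
  refine ⟨f, hf, fun i χ ↦ ?_, fun i j hij m a b ↦ hgeneric i j hij (Sum.inr ⟨m, a, b⟩)⟩
  obtain ⟨j, hj⟩ := exists_ne i
  exact hgeneric i j hj.symm (Sum.inl χ)

end ForcingCondition

end Forcing

theorem countable_theory_models_overlap_principal_general {L : FirstOrder.Language.{u, v}}
    [Countable L.Symbols] {T : L.Theory} (hT : T.IsSatisfiable) :
    ∃ Mod : (ℕ → Bool) → Theory.ModelType.{u, v, max u v} T, (∀ i, Countable (Mod i)) ∧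
      ∀ i j, i ≠ j → ∀ (m : ℕ) (a : Fin m → Mod i) (b : Fin m → Mod j),
        tpSet L (Mod i) a = tpSet L (Mod j) b → IsPrincipalOver T (tpSet L (Mod i) a) := by
  obtain ⟨f, hf, hhenkin, hsep⟩ := ForcingCondition.exists_pairwise_generic_conditions hT
  choose Mod x hx hreal using fun i ↦
    ForcingCondition.exists_surjective_realize (hf i) (hhenkin i)
  refine ⟨Mod, fun i ↦ (hx i).countable, fun i j hij m a b hab ↦ ?_⟩
  obtain ⟨k, rfl⟩ := (hx i).comp_left a
  obtain ⟨l, rfl⟩ := (hx j).comp_left b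
  obtain ⟨n, hseparates | hdecides⟩ := hsep i j hij m k l
  · exact absurd hab (hseparates.tpSet_ne (hreal i n) (hreal j n))
  · exact hdecides.isPrincipalOver_tpSet (hreal i n)

/-- For every consistent countable theory with an infinite model there is a family of
`2^ℵ₀` countable models overlapping only on principal types: any complete type of a finite
tuple realized in two distinct models of the family is isolated by a single formula `ψ`
consistent with `T` such that `T ⊨ ∀x̄ (ψ → φ)` for every `φ` in the type. -/
theorem countable_theory_models_overlap_principal (L : FirstOrder.Language.{0, 0})
    (hL : L.card ≤ ℵ₀) (T : L.Theory) (hT : T.Countable)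
    (hinf : ∃ M : Theory.ModelType.{0, 0, 0} T, Infinite M) :
    ∃ (ι : Type) (_ : #ι = 2 ^ ℵ₀) (Mod : ι → Theory.ModelType.{0, 0, 0} T),
      (∀ i, Countable (Mod i)) ∧
      ∀ i j : ι, i ≠ j →
        ∀ (m : ℕ) (a : Fin m → Mod i) (b : Fin m → Mod j),
          tpSet L (Mod i) a = tpSet L (Mod j) b →
          ∃ ψ : L.Formula (Fin m),
            (∃ (N : Theory.ModelType.{0, 0, 0} T) (c : Fin m → N), ψ.Realize c) ∧
            ∀ φ ∈ tpSet L (Mod i) a, ∀ (N : Theory.ModelType.{0, 0, 0} T)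
              (c : Fin m → N), ψ.Realize c → φ.Realize c := by
  obtain ⟨M, -⟩ := hinf
  have : Countable L.Symbols := Cardinal.mk_le_aleph0_iff.1 hL
  obtain ⟨Mod, hcount, hoverlap⟩ := countable_theory_models_overlap_principal_general ⟨M⟩
  refine ⟨ℕ → Bool, by simp, Mod, hcount, fun i j hij m a b hab ↦ ?_⟩
  obtain ⟨ψ, hψ, himp⟩ := hoverlap i j hij m a b hab
  exact ⟨ψ, hψ, fun φ hφ ↦ imp_iff_forall_realize.1 (himp φ hφ)⟩
end
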